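/- arXiv:1911.03354 — 9 statements merged into one kernel-verified Lean document; each statement's English description precedes it below -/
import Mathlib

section
/- The group G_{d,q} equals, as a set, the union over m ∈ {0,1,2} and i, j, k ∈ {0, …, d−1} of the matrices B^m · D_{i,j,k}; that is, every element of G_{d,q} is of the form B^m times a diagonal matrix diag(ξ^{jq+k}, ξ^{i+kq}, ξ^{iq+j}), and conversely all such products lie in G_{d,q}. -/
open Matrix

/-!
Conjugation by `B` permutes cyclically the three commuting diagonal matrices `A`, `B⁻¹ A B` and
`B A B⁻¹`, so every word in `A` and `B` can be rewritten as a power of `B` times a product of powers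
of these conjugates, and the relations `B ^ 3 = 1`, `ξ ^ d = 1` bound the exponents. The matrix
`D_{i,j,k}` is `A ^ i * (B⁻¹ A B) ^ j * (B A B⁻¹) ^ k`.
-/

theorem mem_subgroupClosure_iff_val_mem_submonoidClosure {M : Type*} [Monoid M] {s : Set Mˣ}
    (hs : ∀ u ∈ s, IsOfFinOrder (u : M)) (u : Mˣ) :
    u ∈ Subgroup.closure s ↔ (u : M) ∈ Submonoid.closure (Units.val '' s) := by
  have hs' : ∀ u ∈ s, IsOfFinOrder u := fun u hu => Units.isOfFinOrder_val.1 (hs u hu)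
  rw [← Subgroup.mem_toSubmonoid, Subgroup.closure_toSubmonoid_of_isOfFinOrder hs',
    ← Submonoid.mem_map_iff_mem (f := Units.coeHom M) Units.val_injective, MonoidHom.map_mclosure]
  rfl

section CyclicConjugation

variable {M : Type*} [Monoid M] {n d : ℕ} [NeZero n] {b x : M}

open Fin.CommRing in
theorem semiconjBy_pow_of_semiconjBy_succ {a : Fin n → M}
    (hba : ∀ s, SemiconjBy b (a (s + 1)) (a s)) (s : Fin n) (k : ℕ) :
    SemiconjBy (b ^ k) (a (s + k)) (a s) := by
  induction k generalizing s with
  | zero => simp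
  | succ k ih =>
    rw [pow_succ', Nat.cast_succ, add_comm (k : Fin n) 1, ← add_assoc]
    exact (hba s).mul_left (ih (s + 1))

open Fin.CommRing in
theorem mem_closure_pair_of_semiconjBy_succ {a : Fin n → M} (hb : b ^ n = 1)
    (hba : ∀ s, SemiconjBy b (a (s + 1)) (a s)) (s : Fin n) :
    a s ∈ Submonoid.closure {a 0, b} := by
  have hconj : a 0 * b ^ (s : ℕ) = b ^ (s : ℕ) * a s := by
    simpa using (semiconjBy_pow_of_semiconjBy_succ hba 0 s).eq.symm
  have hs : a s = b ^ (n - s) * (a 0 * b ^ (s : ℕ)) := by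
    rw [hconj, ← mul_assoc, ← pow_add, Nat.sub_add_cancel s.is_le', hb, one_mul]
  have ha_mem : a 0 ∈ Submonoid.closure {a 0, b} := Submonoid.subset_closure (by simp)
  have hb_mem : b ∈ Submonoid.closure {a 0, b} := Submonoid.subset_closure (by simp)
  rw [hs]
  exact mul_mem (pow_mem hb_mem _) (mul_mem ha_mem (pow_mem hb_mem _))

-- The commuting conjugates are taken as images under `δ` of elements of a commutative monoid, so
-- that their products are ordinary `Finset` products.
variable {T : Type*} [CommMonoid T] {δ : T →* M} {c : Fin n → T}

theorem semiconjBy_map_prod_of_semiconjBy_succ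
    (hbc : ∀ s, SemiconjBy b (δ (c (s + 1))) (δ (c s))) (e : Fin n → ℕ) :
    SemiconjBy b (δ (∏ s, c s ^ e (s - 1))) (δ (∏ s, c s ^ e s)) := by
  rw [← Equiv.prod_comp (Equiv.addRight 1)]
  simp only [Equiv.coe_addRight, add_sub_cancel_right, SemiconjBy]
  induction (Finset.univ : Finset (Fin n)) using Finset.induction_on with
  | empty => simp
  | insert s t hs ih =>
    simp only [Finset.prod_insert hs, map_mul, map_pow]
    exact ((hbc s).pow_right (e s)).mul_right ih

theorem exists_eq_pow_mul_map_prod_of_mem_closure_pair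
    (hbc : ∀ s, SemiconjBy b (δ (c (s + 1))) (δ (c s)))
    (hx : x ∈ Submonoid.closure {δ (c 0), b}) :
    ∃ (m : ℕ) (e : Fin n → ℕ), x = b ^ m * δ (∏ s, c s ^ e s) := by
  induction hx using Submonoid.closure_induction_right with
  | one => exact ⟨0, 0, by simp⟩
  | mul_right x _ y hy ih =>
    obtain ⟨m, e, rfl⟩ := ih
    rcases hy with rfl | rfl
    · have hprod : ∏ s, c s ^ (e + Pi.single 0 1 : Fin n → ℕ) s = (∏ s, c s ^ e s) * c 0 := by
        simp only [Pi.add_apply, pow_add, Finset.prod_mul_distrib]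
        congr 1
        simp [Pi.single_apply]
      exact ⟨m, e + Pi.single 0 1, by rw [hprod, map_mul, mul_assoc]⟩
    · refine ⟨m + 1, fun s => e (s - 1), ?_⟩
      rw [mul_assoc, ← (semiconjBy_map_prod_of_semiconjBy_succ hbc e).eq, ← mul_assoc, pow_succ]

theorem mem_closure_pair_iff_of_semiconjBy_succ (hd : 0 < d) (hb : b ^ n = 1)
    (hc : ∀ s, c s ^ d = 1) (hbc : ∀ s, SemiconjBy b (δ (c (s + 1))) (δ (c s))) :
    x ∈ Submonoid.closure {δ (c 0), b} ↔
      ∃ m < n, ∃ e : Fin n → ℕ, (∀ s, e s < d) ∧ x = b ^ m * δ (∏ s, c s ^ e s) := by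
  constructor
  · intro hx
    obtain ⟨m, e, rfl⟩ := exists_eq_pow_mul_map_prod_of_mem_closure_pair hbc hx
    refine ⟨m % n, Nat.mod_lt _ (NeZero.pos n), fun s => e s % d, fun s => Nat.mod_lt _ hd, ?_⟩
    simp only [← pow_eq_pow_mod m hb, ← pow_eq_pow_mod _ (hc _)]
  · rintro ⟨m, -, e, -, rfl⟩
    have hmem (s) : c s ∈ (Submonoid.closure {δ (c 0), b}).comap δ :=
      mem_closure_pair_of_semiconjBy_succ (a := δ ∘ c) hb hbc s
    have hprod : ∏ s, c s ^ e s ∈ (Submonoid.closure {δ (c 0), b}).comap δ :=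
      prod_mem fun s _ => pow_mem (hmem s) _
    exact mul_mem (pow_mem (Submonoid.subset_closure (by simp)) m) hprod

end CyclicConjugation

section PermMatrix

variable {R ι : Type*} [DecidableEq ι] [Fintype ι]

theorem permMatrix_pow [Semiring R] (σ : Equiv.Perm ι) (k : ℕ) :
    (σ ^ k).permMatrix R = σ.permMatrix R ^ k := by
  simpa using map_pow (permMatrixHom (R := R)) σ⁻¹ k

theorem semiconjBy_permMatrix_diagonal [NonAssocSemiring R] (σ : Equiv.Perm ι) (v : ι → R) :
    SemiconjBy (σ.permMatrix R) (diagonal v) (diagonal (v ∘ σ)) := by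
  rw [SemiconjBy, PEquiv.toMatrix_toPEquiv_mul, PEquiv.mul_toMatrix_toPEquiv]
  ext i j
  simp [diagonal_apply, Equiv.eq_symm_apply]

theorem permMatrix_addRight_one_three [Zero R] [One R] :
    (Equiv.addRight (1 : Fin 3)).permMatrix R = !![0, 1, 0; 0, 0, 1; 1, 0, 0] := by
  ext i j
  fin_cases i <;> fin_cases j <;> simp [PEquiv.toMatrix_apply]

theorem addRight_one_pow_self (n : ℕ) [NeZero n] : Equiv.addRight (1 : Fin n) ^ n = 1 := by
  ext i : 1
  simpa using congrArg (i + ·) (card_nsmul_eq_zero' (x := (1 : Fin n)))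

theorem permMatrix_addRight_one_pow_self [Semiring R] (n : ℕ) [NeZero n] :
    (Equiv.addRight (1 : Fin n)).permMatrix R ^ n = 1 := by
  rw [← permMatrix_pow, addRight_one_pow_self, permMatrix_one]

end PermMatrix

section DiagonalPermMatrix

variable {R : Type*} [CommSemiring R] {n d : ℕ} [NeZero n]

theorem mem_closure_diagonal_permMatrix_iff (hd : 0 < d) {v : Fin n → R} (hv : v ^ d = 1)
    {X : Matrix (Fin n) (Fin n) R} :
    X ∈ Submonoid.closure {diagonal v, (Equiv.addRight (1 : Fin n)).permMatrix R} ↔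
      ∃ m < n, ∃ e : Fin n → ℕ, (∀ s, e s < d) ∧
        X = (Equiv.addRight (1 : Fin n)).permMatrix R ^ m *
          diagonal fun i => ∏ s, v (i - s) ^ e s := by
  have hbc (s : Fin n) : SemiconjBy ((Equiv.addRight (1 : Fin n)).permMatrix R)
      (diagonal fun i => v (i - (s + 1))) (diagonal fun i => v (i - s)) := by
    simpa [Function.comp_def] using semiconjBy_permMatrix_diagonal
      (Equiv.addRight (1 : Fin n)) fun i => v (i - (s + 1))
  have h := mem_closure_pair_iff_of_semiconjBy_succ (x := X)
    (δ := (diagonalRingHom (Fin n) R).toMonoidHom) (c := fun s i => v (i - s)) hd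
    (permMatrix_addRight_one_pow_self n) (fun s => funext fun i => congrFun hv (i - s)) hbc
  simpa [Finset.prod_fn] using h

theorem mem_subgroupClosure_diagonal_permMatrix_iff (hd : 0 < d) {v : Fin n → R} (hv : v ^ d = 1)
    {A B g : (Matrix (Fin n) (Fin n) R)ˣ} (hA : (A : Matrix (Fin n) (Fin n) R) = diagonal v)
    (hB : (B : Matrix (Fin n) (Fin n) R) = (Equiv.addRight (1 : Fin n)).permMatrix R) :
    g ∈ Subgroup.closure {A, B} ↔
      ∃ m < n, ∃ e : Fin n → ℕ, (∀ s, e s < d) ∧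
        (g : Matrix (Fin n) (Fin n) R) = (B : Matrix (Fin n) (Fin n) R) ^ m *
          diagonal fun i => ∏ s, v (i - s) ^ e s := by
  have hAd : (A : Matrix (Fin n) (Fin n) R) ^ d = 1 := by
    rw [hA, diagonal_pow, hv, diagonal_one']
  have hBn : (B : Matrix (Fin n) (Fin n) R) ^ n = 1 := by
    rw [hB, permMatrix_addRight_one_pow_self]
  have hfin : ∀ u ∈ ({A, B} : Set _), IsOfFinOrder (u : Matrix (Fin n) (Fin n) R) := by
    rintro u (rfl | rfl)
    · exact isOfFinOrder_iff_pow_eq_one.2 ⟨d, hd, hAd⟩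
    · exact isOfFinOrder_iff_pow_eq_one.2 ⟨n, NeZero.pos n, hBn⟩
  rw [mem_subgroupClosure_iff_val_mem_submonoidClosure hfin, Set.image_pair, hA, hB,
    mem_closure_diagonal_permMatrix_iff hd hv]

end DiagonalPermMatrix

theorem stmt_1_general {R : Type*} [CommSemiring R] {d : ℕ} (hd : 0 < d) (q : ℕ) {ξ : R}
    (hξ : ξ ^ d = 1) {A B : (Matrix (Fin 3) (Fin 3) R)ˣ}
    (hA : (A : Matrix (Fin 3) (Fin 3) R) = diagonal ![1, ξ, ξ ^ q])
    (hB : (B : Matrix (Fin 3) (Fin 3) R) = !![0, 1, 0; 0, 0, 1; 1, 0, 0])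
    (g : (Matrix (Fin 3) (Fin 3) R)ˣ) :
    g ∈ Subgroup.closure {A, B} ↔
      ∃ m < 3, ∃ i < d, ∃ j < d, ∃ k < d,
        (g : Matrix (Fin 3) (Fin 3) R) =
          (B : Matrix (Fin 3) (Fin 3) R) ^ m *
            diagonal ![ξ ^ (j * q + k), ξ ^ (i + k * q), ξ ^ (i * q + j)] := by
  have hv : ![1, ξ, ξ ^ q] ^ d = 1 := by
    ext s
    fin_cases s <;> simp [hξ, pow_right_comm]
  have hdiag (e : Fin 3 → ℕ) : (fun i => ∏ s, ![1, ξ, ξ ^ q] (i - s) ^ e s) =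
      ![ξ ^ (e 1 * q + e 2), ξ ^ (e 0 + e 2 * q), ξ ^ (e 0 * q + e 1)] := by
    ext i
    fin_cases i <;> simp [Fin.prod_univ_three, pow_add, pow_mul, pow_right_comm]
  rw [mem_subgroupClosure_diagonal_permMatrix_iff hd hv hA
    (hB.trans permMatrix_addRight_one_three.symm)]
  simp only [hdiag]
  constructor
  · rintro ⟨m, hm, e, he, hg⟩
    exact ⟨m, hm, e 0, he 0, e 1, he 1, e 2, he 2, hg⟩
  · rintro ⟨m, hm, i, hi, j, hj, k, hk, hg⟩
    exact ⟨m, hm, ![i, j, k], by simp [Fin.forall_fin_succ, hi, hj, hk], hg⟩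

/-- The group `G_{d,q}` equals, as a set, the union over `m ∈ {0,1,2}` and
`i, j, k ∈ {0, …, d−1}` of the matrices `B^m · D_{i,j,k}` where
`D_{i,j,k} = diag(ξ^{jq+k}, ξ^{i+kq}, ξ^{iq+j})`. -/
theorem stmt_1 (d q : ℕ) (hd : 1 ≤ d) (hq : q < d) (hdq : Nat.gcd d q = 1)
    (ξ : ℂ) (hξ : IsPrimitiveRoot ξ d)
    (A B : (Matrix (Fin 3) (Fin 3) ℂ)ˣ)
    (hA : (A : Matrix (Fin 3) (Fin 3) ℂ) = Matrix.diagonal ![1, ξ, ξ ^ q])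
    (hB : (B : Matrix (Fin 3) (Fin 3) ℂ) = !![0,1,0; 0,0,1; 1,0,0])
    (g : (Matrix (Fin 3) (Fin 3) ℂ)ˣ) :
    g ∈ Subgroup.closure {A, B} ↔
      ∃ m < 3, ∃ i < d, ∃ j < d, ∃ k < d,
        (g : Matrix (Fin 3) (Fin 3) ℂ) =
          (B : Matrix (Fin 3) (Fin 3) ℂ) ^ m *
            Matrix.diagonal ![ξ ^ (j * q + k), ξ ^ (i + k * q), ξ ^ (i * q + j)] :=
  stmt_1_general hd q hξ.pow_eq_one hA hB g
end

section
/- Let d' = gcd(d, q³+1). The set of triples (i, j, k) ∈ (ℤ/dℤ)³ satisfying the system of congruences jq + k ≡ 0, i + kq ≡ 0, iq + j ≡ 0 (mod d) is exactly { (q²ℓ(d/d'), ℓ(d/d'), −qℓ(d/d')) mod d : ℓ = 0, 1, …, d'−1 }; in particular the system has exactly d' = gcd(d, q³+1) solutions in (ℤ/dℤ)³. -/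
/-!
The first two congruences give `k = -qj` and then `i = q²j`; this reduces the cyclic system
to the single congruence `j(q³ + 1) ≡ 0 (mod d)`. Its solutions form the kernel of multiplication
by `q³ + 1` on the cyclic group `ℤ/dℤ`, the subgroup of order `d' = gcd(d, q³ + 1)` generated
by `d/d'`.
-/

section CommRing

variable {R : Type*} [CommRing R]

/-- The solutions `(i, j, k)` of the cyclic linear system `jq + k = 0`, `i + kq = 0`, `iq + j = 0`
over a commutative ring. -/
def cyclicSystemSolutions (q : R) : Set (R × R × R) :=
  {x | x.2.1 * q + x.2.2 = 0 ∧ x.1 + x.2.2 * q = 0 ∧ x.1 * q + x.2.1 = 0}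

theorem cyclicSystemSolutions_eq_image (q : R) :
    cyclicSystemSolutions q =
      (fun j ↦ (q ^ 2 * j, j, -(q * j))) '' {j | j * (q ^ 3 + 1) = 0} := by
  ext ⟨i, j, k⟩
  simp only [cyclicSystemSolutions, Set.mem_ofPred_eq, Set.mem_image, Prod.mk.injEq]
  constructor
  · rintro ⟨hjk, hik, hij⟩
    have hk : -(q * j) = k := by linear_combination -hjk
    have hi : q ^ 2 * j = i := by linear_combination q * hjk - hik
    exact ⟨j, by linear_combination hij + q * hi, hi, rfl, hk⟩
  · rintro ⟨j, hj, rfl, rfl, rfl⟩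
    exact ⟨by ring, by ring, by linear_combination hj⟩

theorem ncard_cyclicSystemSolutions (q : R) :
    (cyclicSystemSolutions q).ncard = {j : R | j * (q ^ 3 + 1) = 0}.ncard := by
  rw [cyclicSystemSolutions_eq_image]
  exact Set.ncard_image_of_injective _ fun _ _ h ↦ congrArg (·.2.1) h

end CommRing

theorem dvd_mul_iff_div_gcd_dvd {d n : ℕ} (h : 0 < d.gcd n) (m : ℕ) :
    d ∣ m * n ↔ d / d.gcd n ∣ m := by
  rw [Nat.div_dvd_iff_dvd_mul (Nat.gcd_dvd_left d n) h, mul_comm (d.gcd n),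
    Nat.dvd_mul_gcd_iff_dvd_mul]

section ZMod

variable {d : ℕ} [NeZero d]

theorem zmod_mul_natCast_eq_zero_iff (x : ZMod d) (n : ℕ) :
    x * n = 0 ↔ ∃ ℓ < d.gcd n, x = (ℓ * (d / d.gcd n) : ℕ) := by
  have dvd_iff (m : ℕ) : (m : ZMod d) * n = 0 ↔ d / d.gcd n ∣ m := by
    rw [← Nat.cast_mul, ZMod.natCast_eq_zero_iff,
      dvd_mul_iff_div_gcd_dvd (Nat.gcd_pos_of_pos_left n (NeZero.pos d))]
  constructor
  · intro hx
    obtain ⟨ℓ, hℓ⟩ : d / d.gcd n ∣ x.val := by rwa [← dvd_iff, ZMod.natCast_zmod_val]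
    have hlt : d / d.gcd n * ℓ < d / d.gcd n * d.gcd n := by
      rw [← hℓ, Nat.div_mul_cancel (Nat.gcd_dvd_left d n)]
      exact x.val_lt
    exact ⟨ℓ, Nat.lt_of_mul_lt_mul_left hlt, by rw [mul_comm, ← hℓ, ZMod.natCast_zmod_val]⟩
  · rintro ⟨ℓ, -, rfl⟩
    exact (dvd_iff _).2 (Nat.dvd_mul_left _ _)

theorem ncard_zmod_mul_natCast_eq_zero (n : ℕ) :
    {x : ZMod d | x * n = 0}.ncard = d.gcd n := by
  have hker : {x : ZMod d | x * n = 0} = (nsmulAddMonoidHom (α := ZMod d) n).ker := by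
    ext x
    simp [mul_comm]
  rw [hker, ← Nat.card_coe_set_eq]
  simpa using IsAddCyclic.card_nsmulAddMonoidHom_ker (ZMod d) n

end ZMod

theorem stmt_2_general (d q : ℕ) [NeZero d] :
    cyclicSystemSolutions (q : ZMod d) =
      {x : ZMod d × ZMod d × ZMod d |
        ∃ ℓ < Nat.gcd d (q ^ 3 + 1),
          x = (((q ^ 2 * ℓ * (d / Nat.gcd d (q ^ 3 + 1)) : ℕ) : ZMod d),
               ((ℓ * (d / Nat.gcd d (q ^ 3 + 1)) : ℕ) : ZMod d),
               -((q * ℓ * (d / Nat.gcd d (q ^ 3 + 1)) : ℕ) : ZMod d))} ∧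
    (cyclicSystemSolutions (q : ZMod d)).ncard = Nat.gcd d (q ^ 3 + 1) := by
  have hcast : (q : ZMod d) ^ 3 + 1 = ((q ^ 3 + 1 : ℕ) : ZMod d) := by push_cast; rfl
  constructor
  · rw [cyclicSystemSolutions_eq_image, hcast]
    ext x
    simp only [Set.mem_image, Set.mem_ofPred_eq, zmod_mul_natCast_eq_zero_iff]
    constructor
    · rintro ⟨_, ⟨ℓ, hℓ, rfl⟩, rfl⟩
      exact ⟨ℓ, hℓ, by simp only [Nat.cast_mul, Nat.cast_pow, mul_assoc]⟩
    · rintro ⟨ℓ, hℓ, rfl⟩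
      exact ⟨_, ⟨ℓ, hℓ, rfl⟩, by simp only [Nat.cast_mul, Nat.cast_pow, mul_assoc]⟩
  · rw [ncard_cyclicSystemSolutions, hcast, ncard_zmod_mul_natCast_eq_zero]

/-- Let `d' = gcd(d, q³+1)`.  The set of triples `(i,j,k) ∈ (ℤ/dℤ)³` satisfying
`jq + k ≡ 0`, `i + kq ≡ 0`, `iq + j ≡ 0 (mod d)` is exactly
`{ (q²ℓ(d/d'), ℓ(d/d'), −qℓ(d/d')) mod d : ℓ = 0, …, d'−1 }`;
in particular the system has exactly `d'` solutions. -/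
theorem stmt_2 (d q : ℕ) (hd : 1 ≤ d) (hq : q < d) (hdq : Nat.gcd d q = 1) :
    {x : ZMod d × ZMod d × ZMod d |
        x.2.1 * (q : ZMod d) + x.2.2 = 0 ∧
        x.1 + x.2.2 * (q : ZMod d) = 0 ∧
        x.1 * (q : ZMod d) + x.2.1 = 0} =
      {x : ZMod d × ZMod d × ZMod d |
        ∃ ℓ < Nat.gcd d (q ^ 3 + 1),
          x = (((q ^ 2 * ℓ * (d / Nat.gcd d (q ^ 3 + 1)) : ℕ) : ZMod d),
               ((ℓ * (d / Nat.gcd d (q ^ 3 + 1)) : ℕ) : ZMod d),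
               -((q * ℓ * (d / Nat.gcd d (q ^ 3 + 1)) : ℕ) : ZMod d))} ∧
    {x : ZMod d × ZMod d × ZMod d |
        x.2.1 * (q : ZMod d) + x.2.2 = 0 ∧
        x.1 + x.2.2 * (q : ZMod d) = 0 ∧
        x.1 * (q : ZMod d) + x.2.1 = 0}.ncard = Nat.gcd d (q ^ 3 + 1) := by
  have : NeZero d := ⟨Nat.one_le_iff_ne_zero.mp hd⟩
  exact stmt_2_general d q
end

section
/- The order of the subgroup G_{d,q} of GL₃(ℂ) generated by A and B equals 3d³/gcd(d, q³+1). -/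
open Matrix

/-!
Conjugating a diagonal matrix by the permutation matrix `B` rotates its diagonal entries, so
`G_{d,q} = N ⋊ ⟨B⟩`, where `N` consists of diagonal matrices and is generated by the three rotations
of `A`. Taking exponents of `ξ` identifies `N` with the subgroup `L` of `(ℤ/d)³` generated by
`(0, 1, q)`, `(1, q, 0)` and `(q, 0, 1)`. The form `(a, b, c) ↦ q² a - q b + c` takes the values
`0`, `0`, `q³ + 1` on these generators, and `L` is exactly the preimage of the ideal generated by
`q³ + 1` in `ℤ/d`. Hence `L` has index `gcd(d, q³ + 1)` in `(ℤ/d)³`.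
-/

section ConjugationClosure

variable {G : Type*} [Group G]

/-- The subgroup generated by the conjugates of `a` by all powers of `b`. -/
def zpowConjClosure (a b : G) : Subgroup G :=
  Subgroup.closure (Set.range fun k : ℤ ↦ b ^ k * a * (b ^ k)⁻¹)

theorem zpowers_le_normalizer_zpowConjClosure (a b : G) :
    Subgroup.zpowers b ≤ Subgroup.normalizer (zpowConjClosure a b : Set G) := by
  refine Subgroup.le_normalizer_closure_iff.mpr ?_
  rintro _ ⟨m, rfl⟩ _ ⟨k, rfl⟩
  refine Subgroup.subset_closure ⟨m + k, ?_⟩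
  simp only [_root_.zpow_add, _root_.mul_inv_rev, mul_assoc]

theorem closure_pair_eq_zpowConjClosure_sup_zpowers (a b : G) :
    Subgroup.closure {a, b} = zpowConjClosure a b ⊔ Subgroup.zpowers b := by
  apply le_antisymm
  · rw [Subgroup.closure_le, Set.pair_subset_iff]
    have ha : a ∈ zpowConjClosure a b := Subgroup.subset_closure ⟨0, by simp⟩
    exact ⟨Subgroup.mem_sup_left ha, Subgroup.mem_sup_right (Subgroup.mem_zpowers b)⟩
  · have ha : a ∈ Subgroup.closure {a, b} := Subgroup.subset_closure (by simp)
    have hb : b ∈ Subgroup.closure {a, b} := Subgroup.subset_closure (by simp)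
    refine sup_le ((Subgroup.closure_le _).mpr ?_) (Subgroup.zpowers_le.mpr hb)
    rintro _ ⟨k, rfl⟩
    exact mul_mem (mul_mem (zpow_mem hb k) ha) (inv_mem (zpow_mem hb k))

theorem card_sup_of_disjoint_of_le_normalizer {N K : Subgroup G} (hNK : Disjoint N K)
    (hK : K ≤ Subgroup.normalizer (N : Set G)) :
    Nat.card ↥(N ⊔ K) = Nat.card N * Nat.card K := by
  have hrange : Set.range (fun p : N × K ↦ (p.1 * p.2 : G)) = (N ⊔ K : Subgroup G) := by
    rw [Subgroup.coe_mul_of_right_le_normalizer_left N K hK]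
    ext x
    simp [Set.mem_mul]
  rw [← Nat.card_prod, ← Nat.card_range_of_injective (Subgroup.mul_injective_of_disjoint hNK),
    hrange]
  rfl

theorem card_closure_pair_of_disjoint {a b : G}
    (h : Disjoint (zpowConjClosure a b) (Subgroup.zpowers b)) :
    Nat.card (Subgroup.closure {a, b}) = Nat.card (zpowConjClosure a b) * orderOf b := by
  rw [closure_pair_eq_zpowConjClosure_sup_zpowers, card_sup_of_disjoint_of_le_normalizer h
    (zpowers_le_normalizer_zpowConjClosure a b), Nat.card_zpowers]

end ConjugationClosure

section MonomialMatrices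

variable {ι R : Type*} [Fintype ι] [DecidableEq ι] [CommRing R]

/-- The embedding of the torus `(Rˣ)^ι` into the invertible matrices as diagonal matrices. -/
def diagonalUnits : (ι → Rˣ) →* (Matrix ι ι R)ˣ :=
  (Units.map (diagonalRingHom ι R).toMonoidHom).comp MulEquiv.piUnits.symm.toMonoidHom

theorem coe_diagonalUnits (w : ι → Rˣ) :
    (diagonalUnits w : Matrix ι ι R) = diagonal fun i ↦ (w i : R) := rfl

theorem diagonalUnits_injective :
    Function.Injective (diagonalUnits : (ι → Rˣ) →* (Matrix ι ι R)ˣ) := by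
  intro w w' h
  have hdiag := congrArg Units.val h
  simp only [coe_diagonalUnits, diagonal_eq_diagonal_iff] at hdiag
  exact funext fun i ↦ Units.ext (hdiag i)

/-- The embedding of the symmetric group into the invertible matrices as permutation matrices;
the inverse, inherited from `permMatrixHom`, makes it a homomorphism. -/
def permUnits : Equiv.Perm ι →* (Matrix ι ι R)ˣ :=
  permMatrixHom.toHomUnits

theorem coe_permUnits (σ : Equiv.Perm ι) :
    ((permUnits σ : (Matrix ι ι R)ˣ) : Matrix ι ι R) = σ⁻¹.permMatrix R := rfl

theorem permUnits_conj_diagonalUnits (σ : Equiv.Perm ι) (w : ι → Rˣ) :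
    permUnits σ * diagonalUnits w * (permUnits σ)⁻¹ = diagonalUnits (w ∘ ⇑σ⁻¹) := by
  rw [mul_inv_eq_iff_eq_mul]
  ext i j
  simp only [Units.val_mul, coe_permUnits, coe_diagonalUnits, PEquiv.toMatrix_toPEquiv_mul,
    PEquiv.mul_toMatrix_toPEquiv]
  simp [diagonal_apply, Equiv.Perm.inv_def, Equiv.symm_apply_eq]

theorem eq_one_of_permUnits_eq_diagonalUnits [Nontrivial R] {σ : Equiv.Perm ι} {w : ι → Rˣ}
    (h : permUnits σ = diagonalUnits w) : σ = 1 := by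
  rw [← _root_.inv_eq_one]
  refine Equiv.ext fun i ↦ ?_
  by_contra (hi : σ⁻¹ i ≠ i)
  have hentry := Matrix.ext_iff.mpr (Units.ext_iff.mp h) i (σ⁻¹ i)
  rw [coe_permUnits, coe_diagonalUnits, diagonal_apply_ne' _ hi] at hentry
  simp [PEquiv.toMatrix_apply] at hentry

theorem permUnits_injective [Nontrivial R] :
    Function.Injective (permUnits : Equiv.Perm ι →* (Matrix ι ι R)ˣ) :=
  (injective_iff_map_eq_one _).mpr fun _ hσ ↦
    eq_one_of_permUnits_eq_diagonalUnits (hσ.trans (map_one diagonalUnits).symm)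

theorem zpowConjClosure_diagonalUnits_permUnits (w : ι → Rˣ) (σ : Equiv.Perm ι) :
    zpowConjClosure (diagonalUnits w) (permUnits σ) =
      (Subgroup.closure (Set.range fun k : ℤ ↦ w ∘ ⇑(σ⁻¹ ^ k))).map diagonalUnits := by
  rw [MonoidHom.map_closure, zpowConjClosure, ← Set.range_comp]
  refine congrArg Subgroup.closure (congrArg Set.range (funext fun k ↦ ?_))
  simp only [Function.comp_apply, ← map_zpow, permUnits_conj_diagonalUnits, _root_.inv_zpow]

theorem disjoint_zpowConjClosure_zpowers_permUnits [Nontrivial R] (w : ι → Rˣ) (σ : Equiv.Perm ι) :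
    Disjoint (zpowConjClosure (diagonalUnits w) (permUnits σ))
      (Subgroup.zpowers (permUnits σ)) := by
  rw [zpowConjClosure_diagonalUnits_permUnits, Subgroup.disjoint_def]
  rintro _ ⟨u, -, rfl⟩ ⟨k, hk⟩
  simp only [← map_zpow] at hk
  rw [← hk, eq_one_of_permUnits_eq_diagonalUnits hk, map_one]

theorem card_closure_diagonalUnits_permUnits [Nontrivial R] (w : ι → Rˣ) (σ : Equiv.Perm ι) :
    Nat.card (Subgroup.closure {diagonalUnits w, permUnits σ}) =
      Nat.card (Subgroup.closure (Set.range fun k : ℤ ↦ w ∘ ⇑(σ⁻¹ ^ k))) * orderOf σ := by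
  rw [card_closure_pair_of_disjoint (disjoint_zpowConjClosure_zpowers_permUnits w σ),
    zpowConjClosure_diagonalUnits_permUnits,
    Subgroup.card_map_of_injective diagonalUnits_injective,
    orderOf_injective _ permUnits_injective]

end MonomialMatrices

section ExponentVectors

variable {ι R : Type*} [CommRing R] {ζ : Rˣ} {d : ℕ}

/-- For `ζ` of order `d`, the homomorphism `(ℤ/d)^ι → (Rˣ)^ι` sending `v` to `(ζ ^ v i)ᵢ`. -/
noncomputable def powHom (hζ : IsPrimitiveRoot ζ d) :
    Multiplicative (ι → ZMod d) →* (ι → Rˣ) where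
  toFun v i := ((hζ.zmodEquivZPowers (v.toAdd i)).toMul : Subgroup.zpowers ζ)
  map_one' := by ext; simp
  map_mul' v v' := by ext; simp

theorem powHom_injective (hζ : IsPrimitiveRoot ζ d) :
    Function.Injective (powHom (ι := ι) hζ) := by
  intro v v' h
  exact funext fun i ↦ hζ.zmodEquivZPowers.injective (Subtype.ext (congrFun h i))

theorem powHom_natCast (hζ : IsPrimitiveRoot ζ d) (v : ι → ℕ) :
    powHom hζ (.ofAdd ((↑) ∘ v)) = (ζ ^ ·) ∘ v := by
  ext i
  simp [powHom]

theorem card_closure_image_pow (hζ : IsPrimitiveRoot ζ d) (s : Set (ι → ℕ)) :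
    Nat.card (Subgroup.closure (((ζ ^ ·) ∘ ·) '' s)) =
      Nat.card (AddSubgroup.closure ((((↑) : ℕ → ZMod d) ∘ ·) '' s)) := by
  have hmap : Subgroup.closure (((ζ ^ ·) ∘ ·) '' s) =
      (AddSubgroup.closure ((((↑) : ℕ → ZMod d) ∘ ·) '' s)).toSubgroup.map (powHom hζ) := by
    rw [AddSubgroup.toSubgroup_closure, MonoidHom.map_closure]
    congr 1
    ext w
    simp [← powHom_natCast hζ]
  rw [hmap, Subgroup.card_map_of_injective (powHom_injective hζ)]
  rfl

end ExponentVectors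

section CyclicRotations

variable {α β : Type*}

/-- The cyclic rotations of the vector `(x, y, z)`. -/
def cyclicRotations (x y z : α) : Set (Fin 3 → α) :=
  {![x, y, z], ![y, z, x], ![z, x, y]}

theorem image_comp_cyclicRotations (f : α → β) (x y z : α) :
    (f ∘ ·) '' cyclicRotations x y z = cyclicRotations (f x) (f y) (f z) := by
  have hcomp (a b c : α) : f ∘ ![a, b, c] = ![f a, f b, f c] := by
    ext i
    fin_cases i <;> rfl
  simp only [cyclicRotations, Set.image_insert_eq, Set.image_singleton, hcomp]

theorem range_comp_finRotate_three_zpow (x y z : α) :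
    Set.range (fun k : ℤ ↦ ![x, y, z] ∘ ⇑(finRotate 3 ^ k)) = cyclicRotations x y z := by
  have hcube : finRotate 3 ^ 3 = 1 := by decide
  have hone : ![x, y, z] ∘ ⇑(finRotate 3) = ![y, z, x] := by ext i; fin_cases i <;> rfl
  have htwo : ![x, y, z] ∘ ⇑(finRotate 3 ^ 2) = ![z, x, y] := by ext i; fin_cases i <;> rfl
  apply Set.Subset.antisymm
  · rintro _ ⟨k, rfl⟩
    dsimp only
    rw [zpow_eq_zpow_emod' k hcube]
    obtain h | h | h : k % (3 : ℕ) = 0 ∨ k % (3 : ℕ) = 1 ∨ k % (3 : ℕ) = 2 := by lia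
    all_goals rw [h]
    exacts [.inl rfl, .inr (.inl hone), .inr (.inr htwo)]
  · rintro _ (rfl | rfl | rfl)
    exacts [⟨0, rfl⟩, ⟨1, hone⟩, ⟨2, htwo⟩]

theorem orderOf_finRotate_three : orderOf (finRotate 3) = 3 :=
  orderOf_eq_prime (by decide) (by decide)

theorem permMatrix_finRotate_three (R : Type*) [Zero R] [One R] :
    (finRotate 3).permMatrix R = !![0, 1, 0; 0, 0, 1; 1, 0, 0] := by
  ext i j
  fin_cases i <;> fin_cases j <;> simp [PEquiv.toMatrix_apply]

end CyclicRotations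

section RotationLattice

variable {S : Type*} [CommRing S]

/-- The linear form `(a, b, c) ↦ q² a - q b + c`. Modulo `q³ + 1` its coefficients span the
annihilator of the cyclic rotations of `(0, 1, q)`. -/
def rotationForm (q : S) : (Fin 3 → S) →ₗ[S] S :=
  q ^ 2 • LinearMap.proj 0 - q • LinearMap.proj 1 + LinearMap.proj 2

theorem rotationForm_apply (q : S) (v : Fin 3 → S) :
    rotationForm q v = q ^ 2 * v 0 - q * v 1 + v 2 := by
  simp [rotationForm]

theorem rotationForm_surjective (q : S) : Function.Surjective (rotationForm q) := fun x ↦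
  ⟨![0, 0, x], by simp [rotationForm_apply]⟩

theorem span_cyclicRotations_eq_comap_rotationForm (q : S) :
    Submodule.span S (cyclicRotations 0 1 q) =
      Submodule.comap (rotationForm q) (Ideal.span {q ^ 3 + 1}) := by
  apply le_antisymm
  · rw [Submodule.span_le]
    rintro _ (rfl | rfl | rfl) <;>
      simp only [SetLike.mem_coe, Submodule.mem_comap, rotationForm_apply,
        Ideal.mem_span_singleton]
    · exact ⟨0, by simp⟩
    · exact ⟨0, by simp only [cons_val]; ring⟩
    · exact ⟨1, by simp only [cons_val]; ring⟩
  · intro v hv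
    obtain ⟨m, hm⟩ := Ideal.mem_span_singleton.mp hv
    rw [rotationForm_apply] at hm
    refine Submodule.mem_span_triple.mpr
      ⟨v 1 - q * v 0 + q ^ 2 * m, v 0 - q * m, m, ?_⟩
    ext i
    fin_cases i <;>
      simp only [Fin.mk_one, Fin.reduceFinMk, Fin.zero_eta, Pi.add_apply, Pi.smul_apply,
        smul_eq_mul, cons_val]
    · ring
    · ring
    · linear_combination -hm

theorem index_span_cyclicRotations (q : S) :
    (Submodule.span S (cyclicRotations 0 1 q)).toAddSubgroup.index =
      (Ideal.span {q ^ 3 + 1}).toAddSubgroup.index := by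
  rw [span_cyclicRotations_eq_comap_rotationForm]
  have hcomap : (Submodule.comap (rotationForm q) (Ideal.span {q ^ 3 + 1})).toAddSubgroup =
      (Ideal.span {q ^ 3 + 1}).toAddSubgroup.comap (rotationForm q).toAddMonoidHom := rfl
  rw [hcomap, AddSubgroup.index_comap_of_surjective]
  exact rotationForm_surjective q

theorem closure_eq_span_zmod {M : Type*} [AddCommGroup M] {d : ℕ} [Module (ZMod d) M]
    (s : Set M) : AddSubgroup.closure s = (Submodule.span (ZMod d) s).toAddSubgroup := by
  apply le_antisymm
  · exact (AddSubgroup.closure_le _).mpr Submodule.subset_span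
  · exact Submodule.span_le (p := AddSubgroup.toZModSubmodule d (.closure s)).mpr
      AddSubgroup.subset_closure

theorem index_ideal_span_natCast_zmod (d n : ℕ) :
    (Ideal.span {(n : ZMod d)}).toAddSubgroup.index = d.gcd n := by
  have hn : (n : ZMod d) = Int.castAddHom (ZMod d) n := by simp
  rw [Ideal.span, ← closure_eq_span_zmod, ← AddSubgroup.zmultiples_eq_closure, hn,
    ← AddMonoidHom.map_zmultiples, AddSubgroup.index_map, ZMod.ker_intCastAddHom,
    Int.zmultiples_sup, Int.index_zmultiples, Int.gcd_comm,
    AddMonoidHom.range_eq_top.mpr ZMod.intCast_surjective]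
  simp

theorem card_closure_cyclicRotations_mul_gcd (d q : ℕ) :
    Nat.card (AddSubgroup.closure (cyclicRotations 0 1 (q : ZMod d))) * d.gcd (q ^ 3 + 1) =
      d ^ 3 := by
  have hindex : (AddSubgroup.closure (cyclicRotations 0 1 (q : ZMod d))).index =
      d.gcd (q ^ 3 + 1) := by
    rw [closure_eq_span_zmod (d := d), index_span_cyclicRotations, ← index_ideal_span_natCast_zmod]
    push_cast
    rfl
  rw [← hindex, AddSubgroup.card_mul_index, Nat.card_fun, Nat.card_zmod, Nat.card_fin]

end RotationLattice

theorem card_closure_cyclicRotations_pow_mul_gcd {R : Type*} [CommRing R] {ζ : Rˣ} {d : ℕ}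
    (hζ : IsPrimitiveRoot ζ d) (q : ℕ) :
    Nat.card (Subgroup.closure (cyclicRotations 1 ζ (ζ ^ q))) * d.gcd (q ^ 3 + 1) = d ^ 3 := by
  have hcard := card_closure_image_pow hζ (cyclicRotations 0 1 q)
  simp only [image_comp_cyclicRotations, pow_zero, pow_one, Nat.cast_zero, Nat.cast_one] at hcard
  rw [hcard, card_closure_cyclicRotations_mul_gcd]

theorem stmt_3_general {R : Type*} [CommRing R] [Nontrivial R] (d q : ℕ) (hd : 1 ≤ d)
    (ξ : R) (hξ : IsPrimitiveRoot ξ d)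
    (A B : (Matrix (Fin 3) (Fin 3) R)ˣ)
    (hA : (A : Matrix (Fin 3) (Fin 3) R) = Matrix.diagonal ![1, ξ, ξ ^ q])
    (hB : (B : Matrix (Fin 3) (Fin 3) R) = !![0, 1, 0; 0, 0, 1; 1, 0, 0]) :
    Nat.card ↥(Subgroup.closure {A, B}) = 3 * d ^ 3 / Nat.gcd d (q ^ 3 + 1) := by
  obtain ⟨ζ, rfl⟩ := hξ.isUnit (by lia)
  have hζ : IsPrimitiveRoot ζ d := IsPrimitiveRoot.coe_units_iff.mp hξ
  have hAdiag : A = diagonalUnits ![1, ζ, ζ ^ q] := by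
    refine Units.ext (hA.trans (congrArg diagonal (funext fun i ↦ ?_)))
    fin_cases i <;> simp
  have hBperm : B = permUnits (finRotate 3)⁻¹ := by
    refine Units.ext ?_
    rw [hB, coe_permUnits, _root_.inv_inv, permMatrix_finRotate_three]
  rw [hAdiag, hBperm, card_closure_diagonalUnits_permUnits, _root_.inv_inv,
    range_comp_finRotate_three_zpow, orderOf_inv, orderOf_finRotate_three]
  refine (Nat.div_eq_of_eq_mul_left (Nat.gcd_pos_of_pos_left _ hd) ?_).symm
  rw [← card_closure_cyclicRotations_pow_mul_gcd hζ q]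
  ring

/-- The order of the subgroup `G_{d,q} ⊂ GL₃(ℂ)` generated by `A` and `B`
equals `3d³ / gcd(d, q³+1)`. -/
theorem stmt_3 (d q : ℕ) (hd : 1 ≤ d) (hq : q < d) (hdq : Nat.gcd d q = 1)
    (ξ : ℂ) (hξ : IsPrimitiveRoot ξ d)
    (A B : (Matrix (Fin 3) (Fin 3) ℂ)ˣ)
    (hA : (A : Matrix (Fin 3) (Fin 3) ℂ) = Matrix.diagonal ![1, ξ, ξ ^ q])
    (hB : (B : Matrix (Fin 3) (Fin 3) ℂ) = !![0,1,0; 0,0,1; 1,0,0]) :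
    Nat.card ↥(Subgroup.closure {A, B}) = 3 * d ^ 3 / Nat.gcd d (q ^ 3 + 1) :=
  stmt_3_general d q hd ξ hξ A B hA hB
end

section
/- The group G_{d,q} is small, i.e. no element γ ∈ G_{d,q} has 1 as an eigenvalue of multiplicity exactly 2 (equivalently, no γ ∈ G_{d,q} satisfies dim ker(γ − I₃) = 2), if and only if d divides q³ + 1. -/
open Matrix

/-!
Let `r = q²` and consider the character `χ(w) = ∏ i, w i ^ (r ^ i)` on triples of `d`-th roots of
unity. If `d ∣ q³ + 1` then `r³ ≡ 1 [MOD d]`, so `χ` of a cyclic shift of `w` is a power of `χ(w)`,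
and `ker χ` is a shift-invariant group which contains `(1, ξ, ξ ^ q)`. Hence every element of
`G_{d,q}` is a diagonal matrix with entries in `ker χ` times a cyclic shift. If the shift is
nontrivial, it moves the three coordinates in a single cycle, and a fixed vector is determined by
one coordinate. If it is trivial, the exponents of `χ` are prime to `d`, so that a single nontrivial
diagonal entry cannot be killed by `χ`. Conversely, the conjugates of `A` by powers of `B` combine
to the matrix `diag(1, 1, ξ ^ (q³ + 1))`, which is a reflection unless `d ∣ q³ + 1`.
-/

section FixedSpace

variable {ι K : Type*} [Fintype ι] [DecidableEq ι] [Field K]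

/-- The space of vectors fixed by a square matrix, i.e. its eigenspace for the eigenvalue `1`. -/
abbrev fixedSpace (M : Matrix ι ι K) : Submodule K (ι → K) :=
  LinearMap.ker (Matrix.toLin' (M - 1))

lemma mem_fixedSpace {M : Matrix ι ι K} {v : ι → K} : v ∈ fixedSpace M ↔ M *ᵥ v = v := by
  simp [sub_eq_zero]

lemma finrank_fixedSpace_diagonal_add_ncard (w : ι → K) :
    Module.finrank K (fixedSpace (diagonal w)) + {i | w i ≠ 1}.ncard = Fintype.card ι := by
  classical
  have hdiag : diagonal w - 1 = diagonal fun i ↦ w i - 1 := by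
    rw [← diagonal_one, diagonal_sub]
  have hrank : (diagonal fun i ↦ w i - 1).rank = {i | w i ≠ 1}.ncard := by
    rw [rank_diagonal, ← Nat.card_eq_fintype_card, ← Nat.card_coe_set_eq]
    simp only [sub_ne_zero, Set.coe_ofPred]
  rw [fixedSpace, hdiag, ← hrank, Matrix.rank, ← toLin'_apply', add_comm,
    LinearMap.finrank_range_add_finrank_ker, Module.finrank_pi]

lemma finrank_fixedSpace_diagonal_add_one_eq_card_iff (w : ι → K) :
    Module.finrank K (fixedSpace (diagonal w)) + 1 = Fintype.card ι ↔
      ∃ j t, t ≠ 1 ∧ w = Pi.mulSingle j t := by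
  rw [← finrank_fixedSpace_diagonal_add_ncard w, Nat.add_left_cancel_iff, eq_comm,
    Set.ncard_eq_one]
  constructor
  · rintro ⟨j, hj⟩
    have hw (i : ι) : w i ≠ 1 ↔ i = j := Set.ext_iff.mp hj i
    refine ⟨j, w j, (hw j).mpr rfl, funext fun i ↦ ?_⟩
    obtain rfl | hij := eq_or_ne i j
    · simp
    · simpa [hij] using hw i
  · rintro ⟨j, t, ht, rfl⟩
    exact ⟨j, by ext i; obtain rfl | hij := eq_or_ne i j <;> simp [*]⟩

lemma finrank_fixedSpace_diagonal_mul_permMatrix_le_one {σ : Equiv.Perm ι}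
    (hσ : σ.IsCycleOn Set.univ) (w : ι → K) :
    Module.finrank K (fixedSpace (diagonal w * σ.permMatrix K)) ≤ 1 := by
  cases isEmpty_or_nonempty ι
  · simp [Module.finrank_zero_of_subsingleton]
  obtain ⟨i₀⟩ := ‹Nonempty ι›
  let evalAt : fixedSpace (diagonal w * σ.permMatrix K) →ₗ[K] K :=
    (LinearMap.proj i₀).domRestrict _
  suffices Function.Injective evalAt by
    simpa using LinearMap.finrank_le_finrank_of_injective this
  rw [injective_iff_map_eq_zero]
  rintro ⟨v, hv⟩ (hv₀ : v i₀ = 0)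
  have hfix (i : ι) : w i * v (σ i) = v i := by
    rw [mem_fixedSpace, ← mulVec_mulVec, permMatrix_mulVec] at hv
    simpa [mulVec_diagonal] using congrFun hv i
  have hzero (n : ℕ) (i : ι) (hi : (σ ^ n) i = i₀) : v i = 0 := by
    induction n generalizing i with
    | zero => simpa [← hi] using hv₀
    | succ n ih => rw [← hfix, ih (σ i) (by simpa [pow_succ] using hi), mul_zero]
  ext i
  obtain ⟨n, hn⟩ := hσ.exists_pow_eq' Set.finite_univ (Set.mem_univ i) (Set.mem_univ i₀)
  exact hzero n i hn

end FixedSpace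

section PermMatrix

variable {ι R : Type*} [Fintype ι] [DecidableEq ι] [Semiring R]

lemma permMatrix_mul_diagonal (σ : Equiv.Perm ι) (w : ι → R) :
    σ.permMatrix R * diagonal w = diagonal (w ∘ σ) * σ.permMatrix R := by
  ext i j
  by_cases h : σ i = j <;> simp [Equiv.toPEquiv_apply, h]

variable {A B : (Matrix ι ι R)ˣ} {σ : Equiv.Perm ι} {w : ι → R}

lemma val_inv_eq_permMatrix (hB : (B : Matrix ι ι R) = σ.permMatrix R) :
    ((B⁻¹ : (Matrix ι ι R)ˣ) : Matrix ι ι R) = σ⁻¹.permMatrix R := by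
  apply Units.inv_eq_of_mul_eq_one_right
  rw [hB, ← permMatrix_mul, inv_mul_cancel, permMatrix_one]

lemma val_conj_eq_diagonal (hA : (A : Matrix ι ι R) = diagonal w)
    (hB : (B : Matrix ι ι R) = σ.permMatrix R) :
    ((B * A * B⁻¹ : (Matrix ι ι R)ˣ) : Matrix ι ι R) = diagonal (w ∘ σ) := by
  rw [Units.val_mul, Units.mul_inv_eq_iff_eq_mul, Units.val_mul, hA, hB, permMatrix_mul_diagonal]

end PermMatrix

lemma isCycleOn_addRight_of_prime_card {ι : Type*} [AddGroup ι] (hp : (Nat.card ι).Prime)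
    {a : ι} (ha : a ≠ 0) : (Equiv.addRight a).IsCycleOn Set.univ := by
  have := Fact.mk hp
  refine ⟨Set.bijOn_univ.mpr (Equiv.bijective _), fun i _ j _ ↦ ?_⟩
  obtain ⟨n, hn⟩ := mem_zmultiples_of_prime_card rfl ha (g' := -i + j)
  exact ⟨n, by simp_all⟩

lemma mem_units_of_pow_eq_one {M : Type*} [Monoid M] {S : Submonoid M} {x : Mˣ} {d : ℕ}
    (hd : d ≠ 0) (hxd : x ^ d = 1) (hx : (x : M) ∈ S) : x ∈ S.units := by
  have hinv : x⁻¹ = x ^ (d - 1) :=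
    inv_eq_of_mul_eq_one_right (by rw [mul_pow_sub_one hd, hxd])
  refine S.mem_units_of_val_mem_inv_val_mem hx ?_
  rw [hinv, Units.val_pow_eq_pow_val]
  exact pow_mem hx _

section TranslationMonomials

variable {ι : Type*} [AddGroup ι] [Fintype ι] [DecidableEq ι]

/-- The monomial matrices `diag(w) * P_a`, where `w` lies in a translation-invariant monoid `T` of
vectors and `P_a` is the permutation matrix of the translation `i ↦ i + a`. -/
def translationMonomials {R : Type*} [Semiring R] (T : Submonoid (ι → R))
    (hT : ∀ w ∈ T, ∀ a, w ∘ Equiv.addRight a ∈ T) : Submonoid (Matrix ι ι R) where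
  carrier := {M | ∃ w ∈ T, ∃ a, M = diagonal w * (Equiv.addRight a).permMatrix R}
  one_mem' := ⟨1, T.one_mem, 0, by simp⟩
  mul_mem' := by
    rintro _ _ ⟨w, hw, a, rfl⟩ ⟨v, hv, b, rfl⟩
    refine ⟨w * v ∘ Equiv.addRight a, T.mul_mem hw (hT v hv a), a + b, ?_⟩
    calc diagonal w * (Equiv.addRight a).permMatrix R *
          (diagonal v * (Equiv.addRight b).permMatrix R)
      _ = diagonal w * ((Equiv.addRight a).permMatrix R * diagonal v) *
          (Equiv.addRight b).permMatrix R := by simp only [Matrix.mul_assoc]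
      _ = diagonal w * diagonal (v ∘ Equiv.addRight a) *
          ((Equiv.addRight a).permMatrix R * (Equiv.addRight b).permMatrix R) := by
        rw [permMatrix_mul_diagonal]; simp only [Matrix.mul_assoc]
      _ = _ := by
        rw [diagonal_mul_diagonal', ← permMatrix_mul, Equiv.addRight_add]
        rfl

lemma diagonal_mem_translationMonomials {R : Type*} [Semiring R] {T : Submonoid (ι → R)}
    (hT : ∀ w ∈ T, ∀ a, w ∘ Equiv.addRight a ∈ T) {w : ι → R} (hw : w ∈ T) :
    diagonal w ∈ translationMonomials T hT :=
  ⟨w, hw, 0, by simp⟩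

lemma permMatrix_mem_translationMonomials {R : Type*} [Semiring R] {T : Submonoid (ι → R)}
    (hT : ∀ w ∈ T, ∀ a, w ∘ Equiv.addRight a ∈ T) (a : ι) :
    (Equiv.addRight a).permMatrix R ∈ translationMonomials T hT :=
  ⟨1, T.one_mem, a, by simp⟩

lemma closure_le_units_translationMonomials {R : Type*} [Semiring R] {d : ℕ} (hd : d ≠ 0)
    {T : Submonoid (ι → R)} (hT : ∀ w ∈ T, ∀ a, w ∘ Equiv.addRight a ∈ T) {w : ι → R}
    (hw : w ∈ T) (hwd : w ^ d = 1) {a : ι} {A B : (Matrix ι ι R)ˣ}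
    (hA : (A : Matrix ι ι R) = diagonal w)
    (hB : (B : Matrix ι ι R) = (Equiv.addRight a).permMatrix R) :
    Subgroup.closure {A, B} ≤ (translationMonomials T hT).units := by
  have hAd : A ^ d = 1 := by
    ext1
    rw [Units.val_pow_eq_pow_val, hA, diagonal_pow, hwd, Units.val_one]
    exact diagonal_one
  rw [Subgroup.closure_le, Set.insert_subset_iff, Set.singleton_subset_iff]
  constructor
  · exact mem_units_of_pow_eq_one hd hAd (hA ▸ diagonal_mem_translationMonomials hT hw)
  · refine Submonoid.mem_units_of_val_mem_inv_val_mem _ ?_ ?_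
    · exact hB ▸ permMatrix_mem_translationMonomials hT a
    · rw [val_inv_eq_permMatrix hB, Equiv.neg_addRight]
      exact permMatrix_mem_translationMonomials hT (-a)

lemma finrank_fixedSpace_add_one_ne_card_of_mem_translationMonomials {K : Type*} [Field K]
    (hp : (Nat.card ι).Prime) (hι : 2 < Nat.card ι) {T : Submonoid (ι → K)}
    (hT : ∀ w ∈ T, ∀ a, w ∘ Equiv.addRight a ∈ T)
    (hsingle : ∀ j t, Pi.mulSingle j t ∈ T → t = 1)
    {M : Matrix ι ι K} (hM : M ∈ translationMonomials T hT) :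
    Module.finrank K (fixedSpace M) + 1 ≠ Fintype.card ι := by
  obtain ⟨w, hw, a, rfl⟩ := hM
  obtain rfl | ha := eq_or_ne a 0
  · rw [Equiv.addRight_zero, permMatrix_one, mul_one, ne_eq,
      finrank_fixedSpace_diagonal_add_one_eq_card_iff]
    rintro ⟨j, t, ht, rfl⟩
    exact ht (hsingle j t hw)
  · have hle := finrank_fixedSpace_diagonal_mul_permMatrix_le_one
      (isCycleOn_addRight_of_prime_card hp ha) w
    rw [Nat.card_eq_fintype_card] at hι
    lia

end TranslationMonomials

section GeometricKernel

/-- The kernel of the character `w ↦ ∏ i, w i ^ (r ^ i)` on vectors of `d`-th roots of unity. The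
exponents form a geometric progression so that, when `r ^ n ≡ 1 [MOD d]`, cyclic shifts act on the
character by raising it to powers of `r`. -/
def geometricKernel (R : Type*) [CommMonoid R] (n d r : ℕ) : Submonoid (Fin n → R) where
  carrier := {w | w ^ d = 1 ∧ ∏ i, w i ^ r ^ (i : ℕ) = 1}
  one_mem' := by simp
  mul_mem' := by
    rintro v w ⟨hvd, hv⟩ ⟨hwd, hw⟩
    exact ⟨by rw [mul_pow, hvd, hwd, one_mul],
      by simp only [Pi.mul_apply, mul_pow, Finset.prod_mul_distrib, hv, hw, one_mul]⟩

variable {R : Type*} [CommMonoid R] {n d r : ℕ} [NeZero n]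

lemma coprime_of_pow_modEq_one (h : r ^ n ≡ 1 [MOD d]) : d.Coprime r :=
  (Nat.coprime_of_mul_modEq_one (r ^ (n - 1)) (by rwa [mul_pow_sub_one (NeZero.ne n)])).symm

lemma eq_one_of_pow_pow_eq_one (hr : r ^ n ≡ 1 [MOD d]) {t : R} (ht : t ^ d = 1) {k : ℕ}
    (htk : t ^ r ^ k = 1) : t = 1 := by
  simpa [(coprime_of_pow_modEq_one hr).pow_right k] using pow_gcd_eq_one.mpr ⟨ht, htk⟩

lemma comp_addRight_mem_geometricKernel (hr : r ^ n ≡ 1 [MOD d]) (w : Fin n → R)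
    (hw : w ∈ geometricKernel R n d r) (a : Fin n) :
    w ∘ Equiv.addRight a ∈ geometricKernel R n d r := by
  obtain ⟨hwd, hprod⟩ := hw
  have hroot (i : Fin n) : w i ^ d = 1 := congrFun hwd i
  have hexp (i : Fin n) : r ^ (i : ℕ) * r ^ (a : ℕ) ≡ r ^ ((i + a : Fin n) : ℕ) [MOD d] := by
    have hdiv := (hr.pow ((i + a : ℕ) / n)).mul_left (r ^ ((i + a : ℕ) % n))
    rwa [← pow_mul, ← pow_add, Nat.mod_add_div, one_pow, mul_one, pow_add, ← Fin.val_add] at hdiv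
  refine ⟨funext fun i ↦ hroot (i + a), eq_one_of_pow_pow_eq_one (k := a) hr ?_ ?_⟩
  · rw [← Finset.prod_pow]
    exact Finset.prod_eq_one fun i _ ↦ by
      rw [pow_right_comm, Function.comp_apply, hroot, one_pow]
  · calc (∏ i, w (i + a) ^ r ^ (i : ℕ)) ^ r ^ (a : ℕ)
      _ = ∏ i, w (i + a) ^ (r ^ (i : ℕ) * r ^ (a : ℕ)) := by
        simp only [← Finset.prod_pow, pow_mul]
      _ = ∏ i, w (i + a) ^ r ^ ((i + a : Fin n) : ℕ) :=
        Finset.prod_congr rfl fun i _ ↦ pow_eq_pow_of_modEq (hexp i) (hroot _)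
      _ = ∏ i, w i ^ r ^ (i : ℕ) :=
        Equiv.prod_comp (Equiv.addRight a) fun i ↦ w i ^ r ^ (i : ℕ)
      _ = 1 := hprod

lemma eq_one_of_mulSingle_mem_geometricKernel (hr : r ^ n ≡ 1 [MOD d]) (j : Fin n) (t : R)
    (h : Pi.mulSingle j t ∈ geometricKernel R n d r) : t = 1 := by
  obtain ⟨hroot, hprod⟩ := h
  refine eq_one_of_pow_pow_eq_one (k := j) hr (by simpa using congrFun hroot j) ?_
  rwa [Finset.prod_eq_single j (fun i _ hij ↦ by simp [hij]) (by simp), Pi.mulSingle_eq_same]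
    at hprod

end GeometricKernel

section CubeAddOne

variable {d q : ℕ}

lemma sq_pow_three_modEq_one (hdvd : d ∣ q ^ 3 + 1) : (q ^ 2) ^ 3 ≡ 1 [MOD d] := by
  rw [← Int.natCast_modEq_iff, Int.modEq_comm, Int.modEq_iff_dvd]
  have hfactor : (((q ^ 2) ^ 3 : ℕ) : ℤ) - (1 : ℕ) = ((q ^ 3 + 1 : ℕ) : ℤ) * (q ^ 3 - 1) := by
    push_cast; ring
  rw [hfactor]
  exact (Int.natCast_dvd_natCast.mpr hdvd).mul_right _

lemma vec_mem_geometricKernel {R : Type*} [CommMonoid R] (hdvd : d ∣ q ^ 3 + 1) {ξ : R}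
    (hξ : ξ ^ d = 1) : ![1, ξ, ξ ^ q] ∈ geometricKernel R 3 d (q ^ 2) := by
  refine ⟨?_, ?_⟩
  · ext i
    fin_cases i <;> simp [hξ, pow_right_comm ξ q d]
  · obtain ⟨k, hk⟩ := hdvd
    have hexp : q ^ 2 + q * (q ^ 2) ^ 2 = d * (k * q ^ 2) := by rw [← mul_assoc, ← hk]; ring
    calc ∏ i, ![1, ξ, ξ ^ q] i ^ (q ^ 2) ^ (i : ℕ)
      _ = 1 ^ (q ^ 2) ^ 0 * ξ ^ (q ^ 2) ^ 1 * (ξ ^ q) ^ (q ^ 2) ^ 2 := Fin.prod_univ_three _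
      _ = ξ ^ (q ^ 2 + q * (q ^ 2) ^ 2) := by
        rw [one_pow, one_mul, pow_one, ← pow_mul, ← pow_add]
      _ = 1 := by rw [hexp, pow_mul, hξ, one_pow]

end CubeAddOne

lemma permMatrix_addRight_one_fin_three {R : Type*} [Zero R] [One R] :
    (Equiv.addRight (1 : Fin 3)).permMatrix R = !![0, 1, 0; 0, 0, 1; 1, 0, 0] := by
  ext i j
  fin_cases i <;> fin_cases j <;> simp [Equiv.toPEquiv_apply]

lemma exists_mem_closure_eq_diagonal_mulSingle {R : Type*} [CommSemiring R] {q : ℕ} {ξ : R}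
    {A B : (Matrix (Fin 3) (Fin 3) R)ˣ}
    (hA : (A : Matrix (Fin 3) (Fin 3) R) = diagonal ![1, ξ, ξ ^ q])
    (hB : (B : Matrix (Fin 3) (Fin 3) R) = (Equiv.addRight (1 : Fin 3)).permMatrix R) :
    ∃ γ ∈ Subgroup.closure {A, B},
      (γ : Matrix (Fin 3) (Fin 3) R) = diagonal (Pi.mulSingle 2 (ξ ^ (q ^ 3 + 1))) := by
  have hAmem : A ∈ Subgroup.closure {A, B} := Subgroup.subset_closure (by simp)
  have hBmem : B ∈ Subgroup.closure {A, B} := Subgroup.subset_closure (by simp)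
  have hC : ((B * A * B⁻¹ : (Matrix (Fin 3) (Fin 3) R)ˣ) : Matrix (Fin 3) (Fin 3) R) =
      diagonal ![ξ, ξ ^ q, 1] := by
    rw [val_conj_eq_diagonal hA hB]
    exact congrArg diagonal (by ext i; fin_cases i <;> rfl)
  have hD : ((B⁻¹ * A * B⁻¹⁻¹ : (Matrix (Fin 3) (Fin 3) R)ˣ) : Matrix (Fin 3) (Fin 3) R) =
      diagonal ![ξ ^ q, 1, ξ] := by
    rw [val_conj_eq_diagonal hA (val_inv_eq_permMatrix hB)]
    exact congrArg diagonal (by ext i; fin_cases i <;> rfl)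
  have hCmem := mul_mem (mul_mem hBmem hAmem) (inv_mem hBmem)
  have hDmem := mul_mem (mul_mem (inv_mem hBmem) hAmem) (inv_mem (inv_mem hBmem))
  -- With `C = B A B⁻¹` and `D = B⁻¹ A B`, the diagonal matrices `C ^ q` and `A ^ (q ^ 2) * D` agree
  -- except in the last entry.
  refine ⟨((B * A * B⁻¹) ^ q)⁻¹ * (A ^ q ^ 2 * (B⁻¹ * A * B⁻¹⁻¹)),
    mul_mem (inv_mem (pow_mem hCmem q)) (mul_mem (pow_mem hAmem _) hDmem), ?_⟩
  rw [Units.val_mul, Units.inv_mul_eq_iff_eq_mul, Units.val_mul, Units.val_pow_eq_pow_val,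
    Units.val_pow_eq_pow_val, hC, hD, hA]
  simp only [diagonal_pow, diagonal_mul_diagonal']
  congr 1
  ext i
  fin_cases i <;> simp [Pi.mulSingle, Function.update] <;> ring

theorem stmt_6_general {K : Type*} [Field K] (d q : ℕ) (ξ : K) (hξ : IsPrimitiveRoot ξ d)
    (A B : (Matrix (Fin 3) (Fin 3) K)ˣ)
    (hA : (A : Matrix (Fin 3) (Fin 3) K) = Matrix.diagonal ![1, ξ, ξ ^ q])
    (hB : (B : Matrix (Fin 3) (Fin 3) K) = !![0, 1, 0; 0, 0, 1; 1, 0, 0]) :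
    (∀ γ ∈ Subgroup.closure {A, B},
        Module.finrank K
          (LinearMap.ker (Matrix.toLin' ((γ : Matrix (Fin 3) (Fin 3) K) - 1))) ≠ 2) ↔
      d ∣ q ^ 3 + 1 := by
  rw [← permMatrix_addRight_one_fin_three] at hB
  constructor
  · intro hsmall
    obtain ⟨γ, hγ, hγval⟩ := exists_mem_closure_eq_diagonal_mulSingle hA hB
    by_contra hdvd
    have hne : ξ ^ (q ^ 3 + 1) ≠ 1 := mt (hξ.dvd_of_pow_eq_one _) hdvd
    refine hsmall γ hγ (Nat.add_right_cancel (m := 1) ?_)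
    rw [hγval]
    exact (finrank_fixedSpace_diagonal_add_one_eq_card_iff _).mpr ⟨2, _, hne, rfl⟩
  · intro hdvd γ hγ hfin
    have hr := sq_pow_three_modEq_one hdvd
    have hshift := comp_addRight_mem_geometricKernel (R := K) hr
    have hd : d ≠ 0 := by rintro rfl; simp at hdvd
    have hw := vec_mem_geometricKernel hdvd hξ.pow_eq_one
    have hγmem := closure_le_units_translationMonomials hd hshift hw hw.1 hA hB hγ
    exact finrank_fixedSpace_add_one_ne_card_of_mem_translationMonomials
      (by simp [Nat.prime_three]) (by simp) hshift
      (eq_one_of_mulSingle_mem_geometricKernel hr) hγmem.1 (congrArg (· + 1) hfin)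

/-- The group `G_{d,q}` is small (no element has `1` as an eigenvalue of multiplicity
exactly `2`, i.e. no `γ ∈ G_{d,q}` satisfies `dim ker(γ − I₃) = 2`) if and only if
`d ∣ q³ + 1`. -/
theorem stmt_6 (d q : ℕ) (hd : 1 ≤ d) (hq : q < d) (hdq : Nat.gcd d q = 1)
    (ξ : ℂ) (hξ : IsPrimitiveRoot ξ d)
    (A B : (Matrix (Fin 3) (Fin 3) ℂ)ˣ)
    (hA : (A : Matrix (Fin 3) (Fin 3) ℂ) = Matrix.diagonal ![1, ξ, ξ ^ q])
    (hB : (B : Matrix (Fin 3) (Fin 3) ℂ) = !![0,1,0; 0,0,1; 1,0,0]) :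
    (∀ γ ∈ Subgroup.closure {A, B},
        Module.finrank ℂ
          (LinearMap.ker (Matrix.toLin' ((γ : Matrix (Fin 3) (Fin 3) ℂ) - 1))) ≠ 2) ↔
      d ∣ q ^ 3 + 1 :=
  stmt_6_general d q ξ hξ A B hA hB
end

section
/- Assume d divides q³ + 1. Then gcd(d, gcd(q+1, gcd(q²−q+1, (q³+1)/d))) = gcd(d, gcd(q+1, gcd(3, (q³+1)/d))) = gcd(3, gcd(d, (q³+1)/d)); moreover this common value γ is equal to 1 or 3. -/
/-! Modulo `q + 1` we have `q ≡ -1`, hence `q² - q + 1 ≡ 3`; and by Fermat's little theorem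
`q³ + 1 ≡ q + 1` modulo `3`, so `3 ∣ d ∣ q³ + 1` forces `3 ∣ q + 1`. -/

lemma sq_sub_self_add_one_modEq_three (q : ℕ) : q ^ 2 - q + 1 ≡ 3 [MOD q + 1] := by
  have hle : q ≤ q ^ 2 := Nat.le_self_pow two_ne_zero q
  have factorization : ((q ^ 2 - q + 1 : ℕ) : ℤ) - 3 = ((q + 1 : ℕ) : ℤ) * (q - 2) := by
    push_cast [hle]
    ring
  exact (Nat.modEq_iff_dvd.mpr ⟨_, factorization⟩).symm

lemma gcd_add_one_sq_sub_self_add_one (q : ℕ) :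
    Nat.gcd (q + 1) (q ^ 2 - q + 1) = Nat.gcd (q + 1) 3 := by
  simpa only [Nat.gcd_comm] using (sq_sub_self_add_one_modEq_three q).gcd_eq

lemma prime_dvd_pow_self_add_iff {p : ℕ} (hp : p.Prime) (a b : ℕ) :
    p ∣ a ^ p + b ↔ p ∣ a + b := by
  have : Fact p.Prime := ⟨hp⟩
  simp only [← ZMod.natCast_eq_zero_iff, Nat.cast_add, Nat.cast_pow, ZMod.pow_card]

lemma gcd_dvd_add_of_dvd_pow_prime_add {p : ℕ} (hp : p.Prime) {d a b : ℕ}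
    (hd : d ∣ a ^ p + b) : Nat.gcd p d ∣ a + b := by
  rcases (Nat.dvd_prime hp).mp (Nat.gcd_dvd_left p d) with hone | hself
  · exact hone ▸ one_dvd _
  · rw [hself, ← prime_dvd_pow_self_add_iff hp]
    exact (Nat.gcd_eq_left_iff_dvd.mp hself).trans hd

lemma gcd_gcd_gcd_eq_of_gcd_dvd {k d m : ℕ} (h : Nat.gcd k d ∣ m) (e : ℕ) :
    Nat.gcd d (Nat.gcd m (Nat.gcd k e)) = Nat.gcd k (Nat.gcd d e) :=
  calc Nat.gcd d (Nat.gcd m (Nat.gcd k e))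
      = Nat.gcd (Nat.gcd (Nat.gcd k d) m) e := by ac_rfl
    _ = Nat.gcd k (Nat.gcd d e) := by rw [Nat.gcd_eq_left h, Nat.gcd_assoc]

theorem stmt_7_general (d q e : ℕ) (hdvd : d ∣ q ^ 3 + 1) :
    Nat.gcd d (Nat.gcd (q + 1) (Nat.gcd (q ^ 2 - q + 1) e)) =
        Nat.gcd d (Nat.gcd (q + 1) (Nat.gcd 3 e)) ∧
      Nat.gcd d (Nat.gcd (q + 1) (Nat.gcd 3 e)) = Nat.gcd 3 (Nat.gcd d e) ∧
      (Nat.gcd 3 (Nat.gcd d e) = 1 ∨ Nat.gcd 3 (Nat.gcd d e) = 3) := by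
  refine ⟨?_, ?_, (Nat.dvd_prime Nat.prime_three).mp (Nat.gcd_dvd_left _ _)⟩
  · rw [← Nat.gcd_assoc (q + 1), gcd_add_one_sq_sub_self_add_one, Nat.gcd_assoc]
  · exact gcd_gcd_gcd_eq_of_gcd_dvd (gcd_dvd_add_of_dvd_pow_prime_add Nat.prime_three hdvd) e

/-- Assume `d ∣ q³+1`.  Then
`gcd(d, gcd(q+1, gcd(q²−q+1, (q³+1)/d))) = gcd(d, gcd(q+1, gcd(3, (q³+1)/d)))
 = gcd(3, gcd(d, (q³+1)/d))`, and this common value `γ` is `1` or `3`. -/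
theorem stmt_7 (d q : ℕ) (hd : 1 ≤ d) (hq : q < d) (hdq : Nat.gcd d q = 1)
    (hdvd : d ∣ q ^ 3 + 1) :
    Nat.gcd d (Nat.gcd (q + 1) (Nat.gcd (q ^ 2 - q + 1) ((q ^ 3 + 1) / d))) =
        Nat.gcd d (Nat.gcd (q + 1) (Nat.gcd 3 ((q ^ 3 + 1) / d))) ∧
      Nat.gcd d (Nat.gcd (q + 1) (Nat.gcd 3 ((q ^ 3 + 1) / d))) =
        Nat.gcd 3 (Nat.gcd d ((q ^ 3 + 1) / d)) ∧
      (Nat.gcd 3 (Nat.gcd d ((q ^ 3 + 1) / d)) = 1 ∨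
        Nat.gcd 3 (Nat.gcd d ((q ^ 3 + 1) / d)) = 3) :=
  stmt_7_general d q ((q ^ 3 + 1) / d) hdvd
end

section
/- Let α = gcd(d, q+1). For integers i, j, the matrix B · D_{i,j} has 1 as an eigenvalue if and only if (d/α) divides i + j; and in that case the fixed space ker(B·D_{i,j} − I₃) is the one-dimensional subspace of ℂ³ spanned by the vector (ξ^{iq+i+j}, ξ^{iq+j}, 1). -/
open Matrix

/-!
Both parts concern a weighted cyclic rotation: `v` is fixed exactly when
`a (k + 1) * v (k + 1) = v k` for all `k`, indices cyclic. Solving downwards from the last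
coordinate determines `v` from it, so the fixed vectors lie on one line, and going once around the
cycle leaves the single condition that the product of all weights is `1`. For `B * D_{i,j}` this
product is `(ξ ^ (q + 1)) ^ (i + j)`, where `ξ ^ (q + 1)` is a primitive root of unity of order
`d / gcd(d, q + 1)`.
-/

section WeightedRotation

variable {R : Type*} [CommRing R] {n : ℕ}

/-- The weighted rotation with weights `a`: the diagonal matrix of `a` followed by the cyclic
rotation of coordinates, so that `v` is sent to `k ↦ a (k + 1) * v (k + 1)`. -/
def weightedRotation (a : Fin (n + 1) → R) : Matrix (Fin (n + 1)) (Fin (n + 1)) R :=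
  (finRotate (n + 1)).permMatrix R * diagonal a

/-- The products of the entries of `a` at the indices strictly after `k`: the candidate fixed vector
of `weightedRotation a`, normalized to have last coordinate `1`. -/
def tailProd (a : Fin (n + 1) → R) (k : Fin (n + 1)) : R :=
  ∏ l ∈ Finset.Ioi k, a l

theorem tailProd_last (a : Fin (n + 1) → R) : tailProd a (Fin.last n) = 1 :=
  Finset.prod_eq_one fun l hl => absurd (Finset.mem_Ioi.mp hl) (Fin.le_last l).not_gt

theorem mul_tailProd_zero (a : Fin (n + 1) → R) : a 0 * tailProd a 0 = ∏ k, a k := by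
  rw [tailProd, Finset.mul_prod_Ioi_eq_prod_Ici, ← bot_eq_zero, Finset.Ici_bot]

theorem tailProd_castSucc (a : Fin (n + 1) → R) (k : Fin n) :
    tailProd a k.castSucc = a k.succ * tailProd a k.succ := by
  have Ioi_castSucc : Finset.Ioi k.castSucc = Finset.Ici k.succ := by
    ext l
    simp only [Finset.mem_Ioi, Finset.mem_Ici, Fin.castSucc_lt_iff_succ_le]
  rw [tailProd, Ioi_castSucc, tailProd, Finset.mul_prod_Ioi_eq_prod_Ici]

theorem weightedRotation_mulVec_apply (a v : Fin (n + 1) → R) (k : Fin (n + 1)) :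
    (weightedRotation a *ᵥ v) k = a (k + 1) * v (k + 1) := by
  rw [weightedRotation, ← mulVec_mulVec, permMatrix_mulVec, Function.comp_apply, mulVec_diagonal,
    finRotate_apply]

theorem forall_succ_mul_eq_castSucc_iff (a v : Fin (n + 1) → R) :
    (∀ k : Fin n, a k.succ * v k.succ = v k.castSucc) ↔ v = v (Fin.last n) • tailProd a := by
  constructor
  · intro h
    ext k
    induction k using Fin.reverseInduction with
    | last => simp [tailProd_last]
    | cast k ih =>
      rw [← h k, ih, Pi.smul_apply, Pi.smul_apply, tailProd_castSucc, mul_smul_comm]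
  · intro h k
    rw [h, Pi.smul_apply, Pi.smul_apply, tailProd_castSucc, mul_smul_comm]

theorem weightedRotation_mulVec_eq_self_iff (a v : Fin (n + 1) → R) :
    weightedRotation a *ᵥ v = v ↔
      v = v (Fin.last n) • tailProd a ∧ (∏ k, a k) * v (Fin.last n) = v (Fin.last n) := by
  rw [funext_iff, Fin.forall_fin_succ']
  simp only [weightedRotation_mulVec_apply, Fin.coeSucc_eq_succ, Fin.last_add_one]
  rw [forall_succ_mul_eq_castSucc_iff]
  refine and_congr_right fun hv => ?_
  have hv_zero : v 0 = v (Fin.last n) * tailProd a 0 := congrFun hv 0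
  rw [hv_zero, mul_left_comm, mul_tailProd_zero, mul_comm]

theorem weightedRotation_mulVec_smul_tailProd {a : Fin (n + 1) → R} (ha : ∏ k, a k = 1) (t : R) :
    weightedRotation a *ᵥ (t • tailProd a) = t • tailProd a := by
  simp [weightedRotation_mulVec_eq_self_iff, tailProd_last, ha]

theorem exists_ne_zero_weightedRotation_mulVec_eq_self_iff [IsDomain R] (a : Fin (n + 1) → R) :
    (∃ v, v ≠ 0 ∧ weightedRotation a *ᵥ v = v) ↔ ∏ k, a k = 1 := by
  constructor
  · rintro ⟨v, hv, hfix⟩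
    obtain ⟨hv_eq, hprod⟩ := (weightedRotation_mulVec_eq_self_iff a v).mp hfix
    have hlast : v (Fin.last n) ≠ 0 := fun h => hv (by rw [hv_eq, h, zero_smul])
    exact (mul_eq_right₀ hlast).mp hprod
  · intro ha
    have tailProd_ne_zero : tailProd a ≠ 0 := fun h =>
      one_ne_zero ((tailProd_last a).symm.trans (congrFun h _))
    exact ⟨tailProd a, tailProd_ne_zero, by
      simpa only [one_smul] using weightedRotation_mulVec_smul_tailProd ha 1⟩

theorem ker_toLin'_weightedRotation_sub_one {a : Fin (n + 1) → R} (ha : ∏ k, a k = 1) :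
    LinearMap.ker (toLin' (weightedRotation a - 1)) = Submodule.span R {tailProd a} := by
  ext v
  rw [LinearMap.mem_ker, toLin'_apply, sub_mulVec, one_mulVec, sub_eq_zero,
    Submodule.mem_span_singleton]
  constructor
  · intro hfix
    exact ⟨v (Fin.last n), ((weightedRotation_mulVec_eq_self_iff a v).mp hfix).1.symm⟩
  · rintro ⟨t, rfl⟩
    exact weightedRotation_mulVec_smul_tailProd ha t

theorem weightedRotation_fin_three (a : Fin 3 → R) :
    weightedRotation a = !![0, 1, 0; 0, 0, 1; 1, 0, 0] * diagonal a := by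
  have permMatrix_finRotate_three :
      (finRotate 3).permMatrix R = !![0, 1, 0; 0, 0, 1; 1, 0, 0] := by
    ext k l
    fin_cases k <;> fin_cases l <;> rfl
  rw [weightedRotation, permMatrix_finRotate_three]

theorem tailProd_fin_three (a b c : R) : tailProd ![a, b, c] = ![b * c, c, 1] := by
  have h_two : tailProd ![a, b, c] 2 = 1 := tailProd_last _
  have h_one : tailProd ![a, b, c] 1 = c := by
    simpa [h_two] using tailProd_castSucc ![a, b, c] 1
  have h_zero : tailProd ![a, b, c] 0 = b * c := by
    simpa [h_one] using tailProd_castSucc ![a, b, c] 0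
  ext k
  fin_cases k
  exacts [h_zero, h_one, h_two]

end WeightedRotation

theorem isPrimitiveRoot_pow_div_gcd {M : Type*} [CommMonoid M] {ζ : M} {d m : ℕ}
    (hζ : IsPrimitiveRoot ζ d) (hm : m ≠ 0) : IsPrimitiveRoot (ζ ^ m) (d / d.gcd m) := by
  rw [IsPrimitiveRoot.iff_orderOf, orderOf_pow' ζ hm, ← hζ.eq_orderOf]

theorem prod_zpow_weights {G₀ : Type*} [CommGroupWithZero G₀] {ξ : G₀} (hξ₀ : ξ ≠ 0) (q : ℕ)
    (i j : ℤ) :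
    ∏ k, ![ξ ^ (j * (q : ℤ)), ξ ^ i, ξ ^ (i * (q : ℤ) + j)] k = (ξ ^ (q + 1)) ^ (i + j) := by
  rw [Fin.prod_univ_three, ← zpow_natCast ξ (q + 1), ← _root_.zpow_mul]
  simp only [cons_val, ← zpow_add₀ hξ₀]
  congr 1
  push_cast
  ring

/-- The case `d = 0` is that of a `ξ` of infinite order; the condition is then `i + j = 0`. -/
theorem stmt_11_general {K : Type*} [Field K] {d : ℕ} (q : ℕ) {ξ : K} (hξ₀ : ξ ≠ 0)
    (hξ : IsPrimitiveRoot ξ d) {B : Matrix (Fin 3) (Fin 3) K}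
    (hB : B = !![0, 1, 0; 0, 0, 1; 1, 0, 0]) (i j : ℤ) :
    ((∃ v : Fin 3 → K, v ≠ 0 ∧
        (B * diagonal ![ξ ^ (j * (q : ℤ)), ξ ^ i, ξ ^ (i * (q : ℤ) + j)]) *ᵥ v = v) ↔
      ((d / Nat.gcd d (q + 1) : ℕ) : ℤ) ∣ i + j) ∧
    (((d / Nat.gcd d (q + 1) : ℕ) : ℤ) ∣ i + j →
      LinearMap.ker
          (toLin' (B * diagonal ![ξ ^ (j * (q : ℤ)), ξ ^ i, ξ ^ (i * (q : ℤ) + j)] - 1)) =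
        Submodule.span K {![ξ ^ (i * (q : ℤ) + i + j), ξ ^ (i * (q : ℤ) + j), 1]}) := by
  have prod_eq_one_iff :
      ∏ k, ![ξ ^ (j * (q : ℤ)), ξ ^ i, ξ ^ (i * (q : ℤ) + j)] k = 1 ↔
        ((d / Nat.gcd d (q + 1) : ℕ) : ℤ) ∣ i + j := by
    rw [prod_zpow_weights hξ₀,
      (isPrimitiveRoot_pow_div_gcd hξ q.succ_ne_zero).zpow_eq_one_iff_dvd]
  have first_coord : ξ ^ (i * (q : ℤ) + i + j) = ξ ^ i * ξ ^ (i * (q : ℤ) + j) := by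
    rw [← zpow_add₀ hξ₀, add_left_comm, add_assoc]
  rw [hB, ← weightedRotation_fin_three, first_coord, ← tailProd_fin_three (ξ ^ (j * (q : ℤ))),
    ← prod_eq_one_iff]
  exact ⟨exists_ne_zero_weightedRotation_mulVec_eq_self_iff _, ker_toLin'_weightedRotation_sub_one⟩

/-- Let `α = gcd(d, q+1)`.  The matrix `B · D_{i,j}` has `1` as an eigenvalue if and
only if `(d/α) ∣ i + j`; and in that case its fixed space `ker(B·D_{i,j} − I₃)` is the
line in `ℂ³` spanned by the vector `(ξ^{iq+i+j}, ξ^{iq+j}, 1)`. -/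
theorem stmt_11 (d q : ℕ) (hd : 1 ≤ d) (hq : q < d) (hdq : Nat.gcd d q = 1)
    (ξ : ℂ) (hξ : IsPrimitiveRoot ξ d)
    (B : (Matrix (Fin 3) (Fin 3) ℂ)ˣ)
    (hB : (B : Matrix (Fin 3) (Fin 3) ℂ) = !![0,1,0; 0,0,1; 1,0,0])
    (i j : ℤ) :
    ((∃ v : Fin 3 → ℂ, v ≠ 0 ∧
        ((B : Matrix (Fin 3) (Fin 3) ℂ) *
            Matrix.diagonal ![ξ ^ (j * (q : ℤ)), ξ ^ i, ξ ^ (i * (q : ℤ) + j)]).mulVec v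
          = v) ↔
      ((d / Nat.gcd d (q + 1) : ℕ) : ℤ) ∣ i + j) ∧
    (((d / Nat.gcd d (q + 1) : ℕ) : ℤ) ∣ i + j →
      LinearMap.ker
          (Matrix.toLin'
            ((B : Matrix (Fin 3) (Fin 3) ℂ) *
                Matrix.diagonal ![ξ ^ (j * (q : ℤ)), ξ ^ i, ξ ^ (i * (q : ℤ) + j)] - 1)) =
        Submodule.span ℂ
          {![ξ ^ (i * (q : ℤ) + i + j), ξ ^ (i * (q : ℤ) + j), (1 : ℂ)]}) :=
  stmt_11_general q (hξ.ne_zero (Nat.one_le_iff_ne_zero.mp hd)) hξ hB i j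
end

section
/- Assume d divides q³ + 1 and let α = gcd(d, q+1). If a point P ∈ ℂ³ has a nontrivial stabilizer in G_{d,q} (i.e. there exists g ∈ G_{d,q}, g ≠ I₃, with gP = P), then there exists h ∈ G_{d,q} such that hP lies in L ∪ L₀ ∪ L₁ ∪ ⋯ ∪ L_{α−1}, where L = { (a, 0, 0) : a ∈ ℂ } and L_k = { (a, a, ξ^{k(d/α)} a) : a ∈ ℂ }. -/
open Matrix

/-!
Every element of `G_{d,q}` shifts the coordinates cyclically and multiplies them by `d`-th roots of
unity `w₀, w₁, w₂` with `wᵢ₊₂ wᵢ^(q²) = wᵢ₊₁^q` for all `i` modulo `3`; for `A` this amounts to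
`q³ ≡ -1` modulo `d`. Two cyclically consecutive weights thus determine the third, so a nontrivial
diagonal element only fixes vectors with at most one nonzero coordinate, which a power of `B` moves
into `L`. If a fixing element does shift, then it or its square shifts by one, so that
`Pᵢ = wᵢ Pᵢ₊₁`. Unless `P = 0` this forces `w₀ w₁ w₂ = 1`; choosing `n` with `ξ ^ n = w₀` gives
`A ^ n P = (P₀, P₀, w₀^q w₂ P₀)`, and the relation turns `(w₀^q w₂)^(q+1)` into `(w₀ w₁ w₂)^q = 1`.
-/

section ShiftMonomial

variable {ι R : Type*} [Fintype ι] [AddGroup ι] [Semiring R]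

/-- `IsShiftMonomial M s w` says that `M` is the monomial matrix whose only nonzero entry in row
`i` is `w i`, in column `i + s`. It is phrased through the action on vectors, which is how
such matrices get multiplied and inverted here. -/
def IsShiftMonomial (M : Matrix ι ι R) (s : ι) (w : ι → Rˣ) : Prop :=
  ∀ v i, (M *ᵥ v) i = w i * v (i + s)

namespace IsShiftMonomial

variable {M N : Matrix ι ι R} {s t : ι} {w u : ι → Rˣ}

protected theorem mul (hM : IsShiftMonomial M s w) (hN : IsShiftMonomial N t u) :
    IsShiftMonomial (M * N) (s + t) (w * fun i ↦ u (i + s)) := fun v i ↦ by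
  simp [← mulVec_mulVec, hM _ i, hN v, mul_assoc, add_assoc]

theorem unique (hM : IsShiftMonomial M s w) (hN : IsShiftMonomial N s w) : M = N :=
  mulVec_injective <| funext₂ fun v i ↦ (hM v i).trans (hN v i).symm

variable [DecidableEq ι]

protected theorem one : IsShiftMonomial (1 : Matrix ι ι R) 0 1 := fun v i ↦ by simp

theorem units_inv {g : (Matrix ι ι R)ˣ} (hg : IsShiftMonomial g.val s w) :
    IsShiftMonomial g⁻¹.val (-s) (fun i ↦ w (i + -s))⁻¹ := fun v i ↦ by
  have h := hg (g⁻¹.val *ᵥ v) (i + -s)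
  rw [mulVec_mulVec, Units.mul_inv, one_mulVec, neg_add_cancel_right] at h
  simp [h]

protected theorem pow (hM : IsShiftMonomial M s 1) (n : ℕ) : IsShiftMonomial (M ^ n) (n • s) 1 := by
  induction n with
  | zero => simpa using IsShiftMonomial.one
  | succ n ih =>
    rw [pow_succ, succ_nsmul, ← mul_one (1 : ι → Rˣ)]
    exact ih.mul hM

end IsShiftMonomial

variable [DecidableEq ι]

theorem isShiftMonomial_diagonal (w : ι → Rˣ) :
    IsShiftMonomial (diagonal fun i ↦ (w i : R)) 0 w := fun v i ↦ by
  simp [mulVec_diagonal]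

/-- The group of invertible shift-monomial matrices whose weights lie in a shift-invariant group
`Λ` of weight vectors. -/
def shiftMonomialSubgroup (Λ : Subgroup (ι → Rˣ))
    (hΛ : ∀ w ∈ Λ, ∀ s, (fun i ↦ w (i + s)) ∈ Λ) : Subgroup (Matrix ι ι R)ˣ where
  carrier := {g | ∃ s, ∃ w ∈ Λ, IsShiftMonomial g.val s w}
  one_mem' := ⟨0, 1, one_mem Λ, .one⟩
  mul_mem' := by
    rintro g h ⟨s, w, hw, hg⟩ ⟨t, u, hu, hh⟩
    exact ⟨s + t, _, mul_mem hw (hΛ u hu s), hg.mul hh⟩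
  inv_mem' := by
    rintro g ⟨s, w, hw, hg⟩
    exact ⟨-s, _, inv_mem (hΛ w hw (-s)), hg.units_inv⟩

end ShiftMonomial

section CyclicWeights

/-- The weight vectors of the matrices in `G_{d,q}`, where `G` is the group of units of the ring of
scalars: triples of `d`-torsion elements with `w (i + 2) = w (i + 1) ^ q / w i ^ q ^ 2` for all `i`
modulo `3`. -/
def cyclicWeights (G : Type*) [CommGroup G] (d q : ℕ) : Subgroup (Fin 3 → G) where
  carrier := {w | ∀ i, w i ^ d = 1 ∧ w (i + 2) * w i ^ q ^ 2 = w (i + 1) ^ q}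
  one_mem' := fun i ↦ by simp
  mul_mem' := fun {w u} hw hu i ↦ by
    simp only [Pi.mul_apply, mul_pow, hw i, hu i, mul_one, true_and]
    rw [mul_mul_mul_comm, (hw i).2, (hu i).2]
  inv_mem' := fun {w} hw i ↦ by
    simp only [Pi.inv_apply, inv_pow, hw i, inv_one, true_and]
    rw [← mul_inv, (hw i).2]

variable {G : Type*} [CommGroup G] {d q : ℕ} {w : Fin 3 → G}

theorem comp_add_mem_cyclicWeights (hw : w ∈ cyclicWeights G d q) (s : Fin 3) :
    (fun i ↦ w (i + s)) ∈ cyclicWeights G d q := fun i ↦ by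
  simpa only [add_right_comm _ s] using hw (i + s)

theorem cons_mem_cyclicWeights {x : G} (hx : x ^ d = 1) (hdvd : d ∣ q ^ 3 + 1) :
    ![1, x, x ^ q] ∈ cyclicWeights G d q := by
  have hxq : x * (x ^ q) ^ q ^ 2 = 1 := by
    obtain ⟨m, hm⟩ := hdvd
    rw [← pow_mul, ← pow_succ', ← pow_succ', hm, pow_mul, hx, one_pow]
  intro i
  fin_cases i
  · simp
  · simp [hx, ← pow_mul, sq]
  · simp [hxq, pow_right_comm x q d, hx]

theorem eq_one_of_mem_cyclicWeights (hw : w ∈ cyclicWeights G d q) {i : Fin 3}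
    (hi : w i = 1) (hi' : w (i + 1) = 1) : w = 1 := by
  have hi'' : w (i + 2) = 1 := by simpa [hi, hi'] using (hw i).2
  have cover : ∀ i j : Fin 3, j = i ∨ j = i + 1 ∨ j = i + 2 := by decide
  funext j
  rcases cover i j with rfl | rfl | rfl <;> assumption

theorem pow_succ_eq_one_of_mem_cyclicWeights (hw : w ∈ cyclicWeights G d q)
    (hprod : w 0 * w 1 * w 2 = 1) : (w 0 ^ q * w 2) ^ (q + 1) = 1 :=
  calc (w 0 ^ q * w 2) ^ (q + 1) = (w 2 * w 0 ^ q ^ 2) * (w 0 * w 2) ^ q := by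
        rw [pow_succ', mul_comm (w 0 ^ q), mul_pow, mul_comm (w 2 ^ q), mul_mul_mul_comm,
          ← pow_mul, ← sq, ← mul_pow]
    _ = w 1 ^ q * (w 0 * w 2) ^ q := by rw [show w 2 * w 0 ^ q ^ 2 = w 1 ^ q from (hw 0).2]
    _ = 1 := by rw [← mul_pow, mul_left_comm, ← mul_assoc, hprod, one_pow]

end CyclicWeights

theorem isShiftMonomial_cycle {R : Type*} [Semiring R] :
    IsShiftMonomial (!![0, 1, 0; 0, 0, 1; 1, 0, 0] : Matrix (Fin 3) (Fin 3) R) 1 1 := fun v i ↦ by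
  fin_cases i <;> simp [mulVec, dotProduct, Fin.sum_univ_three]

theorem closure_le_shiftMonomialSubgroup {R : Type*} [CommSemiring R] {d q : ℕ}
    (hdvd : d ∣ q ^ 3 + 1) {ξ : R} (hξ : ξ ^ d = 1) {A B : (Matrix (Fin 3) (Fin 3) R)ˣ}
    (hA : A.val = diagonal ![1, ξ, ξ ^ q]) (hB : IsShiftMonomial B.val 1 1) :
    Subgroup.closure {A, B} ≤ shiftMonomialSubgroup (cyclicWeights Rˣ d q)
      fun _ ↦ comp_add_mem_cyclicWeights := by
  obtain ⟨ξ, rfl⟩ := IsUnit.of_pow_eq_one hξ (ne_zero_of_dvd_ne_zero (Nat.succ_ne_zero _) hdvd)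
  have hA' : A.val = diagonal fun i ↦ (![1, ξ, ξ ^ q] i : R) := by
    rw [hA]
    congr 1
    ext i
    fin_cases i <;> simp
  rw [Subgroup.closure_le]
  rintro g (rfl | rfl)
  · exact ⟨0, _, cons_mem_cyclicWeights (by simpa [Units.ext_iff] using hξ) hdvd,
      hA' ▸ isShiftMonomial_diagonal _⟩
  · exact ⟨1, 1, one_mem _, hB⟩

theorem exists_adjacent_ne_zero_or_exists_eq_zero {M : Type*} [Zero M] (v : Fin 3 → M) :
    (∃ i, v i ≠ 0 ∧ v (i + 1) ≠ 0) ∨ ∃ i, v (i + 1) = 0 ∧ v (i + 2) = 0 := by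
  by_cases h0 : v 0 = 0 <;> by_cases h1 : v 1 = 0 <;> by_cases h2 : v 2 = 0 <;>
    simp [Fin.exists_fin_succ, h0, h1, h2]

theorem pow_mulVec_eq_cons_zero {R : Type*} [Semiring R] {M : Matrix (Fin 3) (Fin 3) R}
    (hM : IsShiftMonomial M 1 1) {v : Fin 3 → R} {i : Fin 3}
    (h1 : v (i + 1) = 0) (h2 : v (i + 2) = 0) : M ^ i.val *ᵥ v = ![v i, 0, 0] := by
  have hi : i.val • (1 : Fin 3) = i := by fin_cases i <;> rfl
  have hMi := hi ▸ hM.pow i.val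
  ext j
  rw [hMi]
  fin_cases j <;> simp [add_comm _ i, h1, h2]

section Domain

variable {R : Type*} [CommRing R] [IsDomain R]

theorem exists_eq_pow_mul_div_gcd {d n : ℕ} [NeZero d] {ξ z : R} (hξ : IsPrimitiveRoot ξ d)
    (hzd : z ^ d = 1) (hzn : z ^ n = 1) :
    ∃ k < d.gcd n, z = ξ ^ (k * (d / d.gcd n)) := by
  have : NeZero (d.gcd n) := ⟨Nat.gcd_ne_zero_left (NeZero.ne d)⟩
  have hroot : IsPrimitiveRoot (ξ ^ (d / d.gcd n)) (d.gcd n) :=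
    hξ.pow (NeZero.pos d) (Nat.div_mul_cancel (Nat.gcd_dvd_left d n)).symm
  obtain ⟨k, hk, rfl⟩ := hroot.eq_pow_of_pow_eq_one (pow_gcd_eq_one.mpr ⟨hzd, hzn⟩)
  exact ⟨k, hk, by rw [← pow_mul, mul_comm]⟩

theorem exists_eq_zero_of_shift_zero {d q : ℕ} {w : Fin 3 → Rˣ}
    (hw : w ∈ cyclicWeights Rˣ d q) (hw1 : w ≠ 1) {M : Matrix (Fin 3) (Fin 3) R}
    (hM : IsShiftMonomial M 0 w) {v : Fin 3 → R} (hv : M *ᵥ v = v) :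
    ∃ i, v (i + 1) = 0 ∧ v (i + 2) = 0 := by
  have weight_eq_one {i} (hi : v i ≠ 0) : w i = 1 := by
    have h := hM v i
    rw [hv, add_zero] at h
    exact Units.val_eq_one.mp <| (right_eq_mul₀ hi).mp h
  refine (exists_adjacent_ne_zero_or_exists_eq_zero v).resolve_left ?_
  rintro ⟨i, hi, hi'⟩
  exact hw1 <| eq_one_of_mem_cyclicWeights hw (weight_eq_one hi) (weight_eq_one hi')

theorem exists_pow_mulVec_eq_of_shift_one {d q : ℕ} [NeZero d] {ξ : R}
    (hξ : IsPrimitiveRoot ξ d) {w : Fin 3 → Rˣ} (hw : w ∈ cyclicWeights Rˣ d q)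
    {M : Matrix (Fin 3) (Fin 3) R} (hM : IsShiftMonomial M 1 w) {v : Fin 3 → R}
    (hv : M *ᵥ v = v) (hv0 : v 0 ≠ 0) :
    ∃ n, ∃ k < d.gcd (q + 1), diagonal ![1, ξ, ξ ^ q] ^ n *ᵥ v =
      ![v 0, v 0, ξ ^ (k * (d / d.gcd (q + 1))) * v 0] := by
  have h0 : v 0 = w 0 * v 1 := by simpa [hv] using hM v 0
  have h1 : v 1 = w 1 * v 2 := by simpa [hv] using hM v 1
  have h2 : v 2 = w 2 * v 0 := by simpa [hv] using hM v 2
  have hprod : w 0 * w 1 * w 2 = 1 := by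
    refine Units.ext <| (right_eq_mul₀ hv0).mp ?_
    calc v 0 = w 0 * (w 1 * (w 2 * v 0)) := by rw [← h2, ← h1, ← h0]
      _ = _ := by push_cast; ring
  have hpow : (w 0 ^ q * w 2) ^ d = 1 := by
    rw [mul_pow, pow_right_comm, (hw 0).1, (hw 2).1, one_pow, one_mul]
  obtain ⟨n, -, hn⟩ := hξ.eq_pow_of_pow_eq_one (ξ := (w 0 : R))
    (by simp [← Units.val_pow_eq_pow_val, (hw 0).1])
  obtain ⟨k, hk, hz⟩ := exists_eq_pow_mul_div_gcd hξ (z := (w 0 ^ q * w 2).val)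
    (by rw [← Units.val_pow_eq_pow_val, hpow, Units.val_one])
    (by rw [← Units.val_pow_eq_pow_val, pow_succ_eq_one_of_mem_cyclicWeights hw hprod,
      Units.val_one])
  push_cast at hz
  have hnq : (ξ ^ q) ^ n = w 0 ^ q := by rw [pow_right_comm, hn]
  refine ⟨n, k, hk, ?_⟩
  rw [diagonal_pow, ← hz]
  ext i
  rw [mulVec_diagonal]
  fin_cases i
  · simp
  · simp [hn, ← h0]
  · simp [hnq, h2, mul_assoc]

theorem exists_eq_zero_or_exists_shift_one {d q : ℕ} {g : (Matrix (Fin 3) (Fin 3) R)ˣ}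
    (hg : g ∈ shiftMonomialSubgroup (cyclicWeights Rˣ d q) fun _ ↦ comp_add_mem_cyclicWeights)
    (hg1 : g ≠ 1) {v : Fin 3 → R} (hv : g.val *ᵥ v = v) :
    (∃ i, v (i + 1) = 0 ∧ v (i + 2) = 0) ∨
      ∃ M, ∃ w ∈ cyclicWeights Rˣ d q, IsShiftMonomial M 1 w ∧ M *ᵥ v = v := by
  obtain ⟨s, w, hw, hgw⟩ := hg
  fin_cases s
  · have hw1 : w ≠ 1 := by
      rintro rfl
      exact hg1 <| Units.ext <| hgw.unique .one
    exact .inl <| exists_eq_zero_of_shift_zero hw hw1 hgw hv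
  · exact .inr ⟨g.val, w, hw, hgw, hv⟩
  · exact .inr ⟨g.val * g.val, _, mul_mem hw (comp_add_mem_cyclicWeights hw 2), hgw.mul hgw,
      by rw [← mulVec_mulVec, hv, hv]⟩

theorem stmt_13_general (d q : ℕ) (hdvd : d ∣ q ^ 3 + 1) (ξ : R) (hξ : IsPrimitiveRoot ξ d)
    (A B : (Matrix (Fin 3) (Fin 3) R)ˣ)
    (hA : (A : Matrix (Fin 3) (Fin 3) R) = Matrix.diagonal ![1, ξ, ξ ^ q])
    (hB : (B : Matrix (Fin 3) (Fin 3) R) = !![0, 1, 0; 0, 0, 1; 1, 0, 0])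
    (P : Fin 3 → R)
    (hP : ∃ g ∈ Subgroup.closure {A, B}, g ≠ 1 ∧
      (g : Matrix (Fin 3) (Fin 3) R).mulVec P = P) :
    ∃ h ∈ Subgroup.closure {A, B},
      (∃ a : R, (h : Matrix (Fin 3) (Fin 3) R).mulVec P = ![a, 0, 0]) ∨
      ∃ k < Nat.gcd d (q + 1), ∃ a : R,
        (h : Matrix (Fin 3) (Fin 3) R).mulVec P =
          ![a, a, ξ ^ (k * (d / Nat.gcd d (q + 1))) * a] := by
  have : NeZero d := ⟨ne_zero_of_dvd_ne_zero (Nat.succ_ne_zero _) hdvd⟩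
  have hB' : IsShiftMonomial B.val 1 1 := hB ▸ isShiftMonomial_cycle
  have hG := closure_le_shiftMonomialSubgroup hdvd hξ.pow_eq_one hA hB'
  have hBmem (n : ℕ) : B ^ n ∈ Subgroup.closure {A, B} :=
    pow_mem (Subgroup.subset_closure (by simp)) n
  have hAmem (n : ℕ) : A ^ n ∈ Subgroup.closure {A, B} :=
    pow_mem (Subgroup.subset_closure (by simp)) n
  obtain ⟨g, hg, hg1, hgP⟩ := hP
  obtain ⟨i, h1, h2⟩ | ⟨M, w, hw, hM, hMP⟩ := exists_eq_zero_or_exists_shift_one (hG hg) hg1 hgP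
  · refine ⟨B ^ i.val, hBmem _, .inl ⟨P i, ?_⟩⟩
    rw [Units.val_pow_eq_pow_val, pow_mulVec_eq_cons_zero hB' h1 h2]
  by_cases h0 : P 0 = 0
  · have h2 : P 2 = 0 := by simpa [hMP, h0] using hM P 2
    refine ⟨B, by simpa using hBmem 1, .inl ⟨P 1, ?_⟩⟩
    simpa using pow_mulVec_eq_cons_zero hB' (i := 1) h2 h0
  · obtain ⟨n, k, hk, hn⟩ := exists_pow_mulVec_eq_of_shift_one hξ hw hM hMP h0
    exact ⟨A ^ n, hAmem n, .inr ⟨k, hk, P 0, by rw [Units.val_pow_eq_pow_val, hA, hn]⟩⟩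

end Domain

/-- Assume `d ∣ q³+1` and let `α = gcd(d, q+1)`.  If a point `P ∈ ℂ³` has a nontrivial
stabilizer in `G_{d,q}`, then some `h ∈ G_{d,q}` moves `P` into
`L ∪ L₀ ∪ ⋯ ∪ L_{α−1}`, where `L = {(a,0,0)}` and `L_k = {(a, a, ξ^{k(d/α)} a)}`. -/
theorem stmt_13 (d q : ℕ) (hd : 1 ≤ d) (hq : q < d) (hdq : Nat.gcd d q = 1)
    (hdvd : d ∣ q ^ 3 + 1)
    (ξ : ℂ) (hξ : IsPrimitiveRoot ξ d)
    (A B : (Matrix (Fin 3) (Fin 3) ℂ)ˣ)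
    (hA : (A : Matrix (Fin 3) (Fin 3) ℂ) = Matrix.diagonal ![1, ξ, ξ ^ q])
    (hB : (B : Matrix (Fin 3) (Fin 3) ℂ) = !![0,1,0; 0,0,1; 1,0,0])
    (P : Fin 3 → ℂ)
    (hP : ∃ g ∈ Subgroup.closure {A, B}, g ≠ 1 ∧
      (g : Matrix (Fin 3) (Fin 3) ℂ).mulVec P = P) :
    ∃ h ∈ Subgroup.closure {A, B},
      (∃ a : ℂ, (h : Matrix (Fin 3) (Fin 3) ℂ).mulVec P = ![a, 0, 0]) ∨
      ∃ k < Nat.gcd d (q + 1), ∃ a : ℂ,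
        (h : Matrix (Fin 3) (Fin 3) ℂ).mulVec P =
          ![a, a, ξ ^ (k * (d / Nat.gcd d (q + 1))) * a] :=
  stmt_13_general d q hdvd ξ hξ A B hA hB P hP
end

section
/- Assume d divides q³ + 1, let α = gcd(d, q+1) and γ = gcd(3, gcd(d, (q³+1)/d)). For all integers k, k', the G_{d,q}-orbits of the lines L_k and L_{k'} coincide (i.e. { g·P : g ∈ G_{d,q}, P ∈ L_k } = { g·P : g ∈ G_{d,q}, P ∈ L_{k'} } as subsets of ℂ³) if and only if k ≡ k' (mod γ). -/
open Matrix

/-!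
Every element of `G = ⟨A, B⟩` cyclically shifts the coordinates of a vector and scales them by
powers `ξ ^ e i`. The exponent vectors `e` that occur are exactly the zeros modulo `d` of the linear
form `e 2 - q * e 1 + q ^ 2 * e 0`, which a cyclic shift multiplies by a power of `-q` because
`q ^ 3 = -1`. The form takes the values `x` on `(0, 0, x)` and `t * (q ^ 2 - q + 1)` on `(t, t, t)`,
and `-q` fixes `y` when `(q + 1) * y = 0`. Hence, for such `y`, the vector `(1, 1, ξ ^ x)` lies in
the orbit of the line through `(1, 1, ξ ^ y)` iff `q ^ 2 - q + 1` divides `x - y` modulo `d`. This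
becomes the stated congruence because `gcd (q ^ 2 - q + 1) d = (d / α) * γ`.
-/

section LineOrbit

variable {n R : Type*} [Fintype n] [DecidableEq n] [CommSemiring R]

/-- The orbit under the matrix group `G` of the line spanned by `v`, encoded as the set of all
points on the images of this line. -/
def lineOrbit (G : Subgroup (Matrix n n R)ˣ) (v : n → R) : Set (n → R) :=
  {x | ∃ g ∈ G, ∃ a : R, x = (g : Matrix n n R) *ᵥ (a • v)}

lemma self_mem_lineOrbit (G : Subgroup (Matrix n n R)ˣ) (v : n → R) : v ∈ lineOrbit G v :=
  ⟨1, one_mem G, 1, by simp⟩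

lemma lineOrbit_subset_iff {G : Subgroup (Matrix n n R)ˣ} {v w : n → R} :
    lineOrbit G v ⊆ lineOrbit G w ↔ v ∈ lineOrbit G w := by
  refine ⟨fun h => h (self_mem_lineOrbit G v), ?_⟩
  rintro ⟨g, hg, a, rfl⟩ x ⟨g', hg', b, rfl⟩
  refine ⟨g' * g, mul_mem hg' hg, b * a, ?_⟩
  rw [Units.val_mul, ← mulVec_mulVec, mul_smul, mulVec_smul (g : Matrix n n R) b]

lemma lineOrbit_eq_iff {G : Subgroup (Matrix n n R)ˣ} {v w : n → R} :
    lineOrbit G v = lineOrbit G w ↔ v ∈ lineOrbit G w ∧ w ∈ lineOrbit G v := by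
  rw [Set.Subset.antisymm_iff, lineOrbit_subset_iff, lineOrbit_subset_iff]

lemma lineOrbit_one_one (G : Subgroup (Matrix (Fin 3) (Fin 3) R)ˣ) (z : R) :
    lineOrbit G ![1, 1, z] =
      {x | ∃ g ∈ G, ∃ a : R, x = (g : Matrix (Fin 3) (Fin 3) R).mulVec ![a, a, z * a]} := by
  simp [lineOrbit, mul_comm z]

end LineOrbit

section IsMonomial

variable {ι R : Type*} [AddGroup ι] [Fintype ι] [DecidableEq ι] [CommSemiring R]
  {g g' : (Matrix ι ι R)ˣ} {c c' : ι → Rˣ} {s s' : ι}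

/-- The monomial matrices over an additive group of indices whose underlying permutation is a
translation: `g` translates coordinates by `s`, then scales the `i`-th one by `c i`. This is
expressed through the action on vectors, so that products and inverses need no entrywise
computation. -/
def IsMonomial (g : (Matrix ι ι R)ˣ) (c : ι → Rˣ) (s : ι) : Prop :=
  ∀ v i, ((g : Matrix ι ι R) *ᵥ v) i = c i * v (i + s)

namespace IsMonomial

lemma one : IsMonomial (1 : (Matrix ι ι R)ˣ) 1 0 := fun v i => by simp

lemma mul (h : IsMonomial g c s) (h' : IsMonomial g' c' s') :
    IsMonomial (g * g') (fun i => c i * c' (i + s)) (s + s') := fun v i => by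
  rw [Units.val_mul, ← mulVec_mulVec, h, h', Units.val_mul, mul_assoc, add_assoc]

lemma inv (h : IsMonomial g c s) : IsMonomial g⁻¹ (fun i => (c (i - s))⁻¹) (-s) := fun v i => by
  have hv := h ((↑g⁻¹ : Matrix ι ι R) *ᵥ v) (i - s)
  rw [mulVec_mulVec, Units.mul_inv, one_mulVec, sub_add_cancel] at hv
  rw [← sub_eq_add_neg, hv, Units.inv_mul_cancel_left]

lemma pow_of_diagonal (h : IsMonomial g c 0) (n : ℕ) : IsMonomial (g ^ n) (c ^ n) 0 := by
  induction n with
  | zero => simpa using one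
  | succ n ih => simpa [pow_succ, Pi.mul_def] using ih.mul h

lemma pow_of_translation (h : IsMonomial g 1 s) (n : ℕ) : IsMonomial (g ^ n) 1 (n • s) := by
  induction n with
  | zero => simpa using one
  | succ n ih => simpa [pow_succ, succ_nsmul, Pi.one_def] using ih.mul h

end IsMonomial

end IsMonomial

section Weight

variable {M : Type*} [CommRing M]

/-- The linear form on exponent vectors whose kernel over `ZMod d` consists of the exponents of the
diagonal matrices in `G_{d,q}`. It is normalized so that `(0, 0, x)` has weight `x`. -/
def exponentWeight (q : M) : (Fin 3 → M) →ₗ[M] M :=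
  LinearMap.proj 2 - q • LinearMap.proj 1 + q ^ 2 • LinearMap.proj 0

lemma exponentWeight_apply (q : M) (e : Fin 3 → M) :
    exponentWeight q e = e 2 - q * e 1 + q ^ 2 * e 0 := by
  simp [exponentWeight]

lemma exponentWeight_translate {q : M} (hq : q ^ 3 = -1) (e : Fin 3 → M) (s : Fin 3) :
    exponentWeight q (fun i => e (i + s)) = (-q) ^ (s : ℕ) * exponentWeight q e := by
  simp only [exponentWeight_apply]
  fin_cases s
  · simp
  · change e 0 - q * e 2 + q ^ 2 * e 1 = (-q) ^ 1 * (e 2 - q * e 1 + q ^ 2 * e 0)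
    linear_combination e 0 * hq
  · change e 1 - q * e 0 + q ^ 2 * e 2 = (-q) ^ 2 * (e 2 - q * e 1 + q ^ 2 * e 0)
    linear_combination (e 1 - q * e 0) * hq

end Weight

section MonomialGroup

variable {M R : Type*} [CommRing M] [CommSemiring R]

/-- The group of monomial `3 × 3` matrices that translate the coordinates and scale them by
`ψ (e i)` for an exponent vector `e` of weight zero; for the character `ψ x = ξ ^ x` of `ZMod d` it
is `G_{d,q}`. -/
def monomialGroup (ψ : AddChar M Rˣ) {q : M} (hq : q ^ 3 = -1) :
    Subgroup (Matrix (Fin 3) (Fin 3) R)ˣ where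
  carrier := {g | ∃ e s, exponentWeight q e = 0 ∧ IsMonomial g (fun i => ψ (e i)) s}
  one_mem' := ⟨0, 0, map_zero _, by simpa [Pi.one_def] using IsMonomial.one⟩
  mul_mem' := by
    rintro g g' ⟨e, s, he, h⟩ ⟨e', s', he', h'⟩
    refine ⟨e + fun i => e' (i + s), s + s', ?_, ?_⟩
    · rw [map_add, exponentWeight_translate hq, he, he', mul_zero, add_zero]
    · simpa only [Pi.add_apply, AddChar.map_add_eq_mul] using h.mul h'
  inv_mem' := by
    rintro g ⟨e, s, he, h⟩
    refine ⟨-fun i => e (i + -s), -s, ?_, ?_⟩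
    · rw [map_neg, exponentWeight_translate hq, he, mul_zero, neg_zero]
    · simpa only [Pi.neg_apply, AddChar.map_neg_eq_inv, ← sub_eq_add_neg] using h.inv

variable {A B : (Matrix (Fin 3) (Fin 3) R)ˣ}

lemma closure_le_monomialGroup {ψ : AddChar M Rˣ} {q : M} (hq : q ^ 3 = -1)
    (hA : IsMonomial A (fun i => ψ (![0, 1, q] i)) 0) (hB : IsMonomial B 1 1) :
    Subgroup.closure {A, B} ≤ monomialGroup ψ hq := by
  rw [Subgroup.closure_le]
  rintro g (rfl | rfl)
  · exact ⟨_, _, by simp [exponentWeight_apply], hA⟩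
  · exact ⟨0, 1, map_zero _, by simpa [Pi.one_def] using hB⟩

/-- The diagonal matrices `A` and `B * A * B⁻¹` have exponent vectors `(0, 1, q)` and `(1, q, 0)`,
which span the kernel of the weight. -/
lemma exists_mem_closure_isMonomial {d : ℕ} [NeZero d] {ψ : AddChar (ZMod d) Rˣ} {q : ZMod d}
    (hA : IsMonomial A (fun i => ψ (![0, 1, q] i)) 0) (hB : IsMonomial B 1 1)
    {e : Fin 3 → ZMod d} (he : exponentWeight q e = 0) (s : Fin 3) :
    ∃ g ∈ Subgroup.closure {A, B}, IsMonomial g (fun i => ψ (e i)) s := by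
  have mem_A : A ∈ Subgroup.closure {A, B} := Subgroup.subset_closure (by simp)
  have mem_B : B ∈ Subgroup.closure {A, B} := Subgroup.subset_closure (by simp)
  obtain ⟨a, ha⟩ := ZMod.natCast_zmod_surjective (e 1 - e 0 * q)
  obtain ⟨b, hb⟩ := ZMod.natCast_zmod_surjective (e 0)
  have he₂ : e 2 = a * q := by
    rw [exponentWeight_apply] at he
    linear_combination he - q * ha
  refine ⟨A ^ a * (B * A ^ b * B⁻¹) * B ^ (s : ℕ), mul_mem (mul_mem (pow_mem mem_A a)
    (mul_mem (mul_mem mem_B (pow_mem mem_A b)) (inv_mem mem_B))) (pow_mem mem_B _), ?_⟩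
  have h := ((hA.pow_of_diagonal a).mul ((hB.mul (hA.pow_of_diagonal b)).mul hB.inv)).mul
    (hB.pow_of_translation s)
  convert h using 1
  · ext1 i
    fin_cases i <;> simp [← AddChar.map_nsmul_eq_pow, ← AddChar.map_add_eq_mul, ha, hb, he₂]
  · fin_cases s <;> rfl

end MonomialGroup

section Orbit

variable {R : Type*} [CommSemiring R] {d : ℕ} [NeZero d] {ψ : AddChar (ZMod d) Rˣ} {q : ZMod d}
  {A B : (Matrix (Fin 3) (Fin 3) R)ˣ}

theorem mem_lineOrbit_closure_iff (hψ : Function.Injective ψ) (hq : q ^ 3 = -1)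
    (hA : IsMonomial A (fun i => ψ (![0, 1, q] i)) 0) (hB : IsMonomial B 1 1)
    (f f' : Fin 3 → ZMod d) :
    (fun i => (ψ (f i) : R)) ∈ lineOrbit (Subgroup.closure {A, B}) (fun i => (ψ (f' i) : R)) ↔
      ∃ (s : Fin 3) (t : ZMod d),
        exponentWeight q f = (-q) ^ (s : ℕ) * exponentWeight q f' + t * (q ^ 2 - q + 1) := by
  have weight_const (t : ZMod d) : exponentWeight q (fun _ => t) = t * (q ^ 2 - q + 1) := by
    rw [exponentWeight_apply]; ring
  constructor
  · rintro ⟨g, hg, a, hf⟩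
    obtain ⟨e, s, he, hge⟩ := closure_le_monomialGroup hq hA hB hg
    have hf_apply (i) : (ψ (f i) : R) = ψ (e i) * (a * ψ (f' (i + s))) := by
      rw [congrFun hf i, hge]; rfl
    obtain ⟨t, rfl⟩ : ∃ t, a = ψ t := ⟨-e 0 + f 0 + -f' (0 + s), by
      simp only [AddChar.map_add_eq_mul, AddChar.map_neg_eq_inv, Units.val_mul, hf_apply,
        Units.inv_mul_cancel_left, Units.mul_inv_cancel_right]⟩
    have hf_add : f = e + (fun _ => t) + fun i => f' (i + s) := by
      ext1 i
      apply hψ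
      ext
      simp [AddChar.map_add_eq_mul, hf_apply, mul_assoc]
    refine ⟨s, t, ?_⟩
    rw [hf_add, map_add, map_add, he, weight_const, exponentWeight_translate hq]
    ring
  · rintro ⟨s, t, hst⟩
    have he : exponentWeight q (f - (fun _ => t) - fun i => f' (i + s)) = 0 := by
      rw [map_sub, map_sub, hst, weight_const, exponentWeight_translate hq]
      ring
    obtain ⟨g, hg, hge⟩ := exists_mem_closure_isMonomial hA hB he s
    refine ⟨g, hg, ψ t, ?_⟩
    ext i
    rw [hge]
    simp [← Units.val_mul, ← AddChar.map_add_eq_mul]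

theorem mem_lineOrbit_closure_iff_dvd_sub (hψ : Function.Injective ψ) (hq : q ^ 3 = -1)
    (hA : IsMonomial A (fun i => ψ (![0, 1, q] i)) 0) (hB : IsMonomial B 1 1)
    (x : ZMod d) {y : ZMod d} (hy : (q + 1) * y = 0) :
    ![1, 1, (ψ x : R)] ∈ lineOrbit (Subgroup.closure {A, B}) ![1, 1, (ψ y : R)] ↔
      q ^ 2 - q + 1 ∣ x - y := by
  have vec (z : ZMod d) : ![1, 1, (ψ z : R)] = fun i => (ψ (![0, 0, z] i) : R) := by
    ext i; fin_cases i <;> simp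
  have neg_q_pow_mul_y (n : ℕ) : (-q) ^ n * y = y := by
    induction n with
    | zero => simp
    | succ n ih => linear_combination ih - (-q) ^ n * hy
  simp only [vec, mem_lineOrbit_closure_iff hψ hq hA hB, exponentWeight_apply]
  simp [neg_q_pow_mul_y, dvd_def, sub_eq_iff_eq_add', mul_comm]

theorem lineOrbit_closure_eq_iff_dvd_sub (hψ : Function.Injective ψ) (hq : q ^ 3 = -1)
    (hA : IsMonomial A (fun i => ψ (![0, 1, q] i)) 0) (hB : IsMonomial B 1 1)
    {x y : ZMod d} (hx : (q + 1) * x = 0) (hy : (q + 1) * y = 0) :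
    lineOrbit (Subgroup.closure {A, B}) ![1, 1, (ψ x : R)] =
        lineOrbit (Subgroup.closure {A, B}) ![1, 1, (ψ y : R)] ↔
      q ^ 2 - q + 1 ∣ x - y := by
  rw [lineOrbit_eq_iff, mem_lineOrbit_closure_iff_dvd_sub hψ hq hA hB x hy,
    mem_lineOrbit_closure_iff_dvd_sub hψ hq hA hB y hx, dvd_sub_comm, and_self]

end Orbit

lemma exists_injective_addChar_intCast_eq_zpow {G : Type*} [CommGroup G] {d : ℕ} [NeZero d] {ξ : G}
    (hξ : IsPrimitiveRoot ξ d) :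
    ∃ ψ : AddChar (ZMod d) G, Function.Injective ψ ∧ ∀ x : ℤ, ψ x = ξ ^ x := by
  have zmodChar_one : AddChar.zmodChar d hξ.pow_eq_one 1 = ξ := by
    simpa using AddChar.zmodChar_apply' hξ.pow_eq_one 1
  refine ⟨AddChar.zmodChar d hξ.pow_eq_one, fun x y hxy => ?_, fun x => ?_⟩
  · exact ZMod.val_injective d (hξ.pow_inj x.val_lt y.val_lt hxy)
  · rw [← zsmul_one, AddChar.map_zsmul_eq_zpow, zmodChar_one]

section Arithmetic

lemma zmod_natCast_dvd_intCast_iff (n a : ℕ) (b : ℤ) :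
    (a : ZMod n) ∣ (b : ZMod n) ↔ (a.gcd n : ℤ) ∣ b := by
  rw [← Int.gcd_natCast_natCast, Int.coe_gcd, gcd_dvd_iff_exists]
  constructor
  · rintro ⟨c, hc⟩
    obtain ⟨x, rfl⟩ := ZMod.intCast_surjective c
    obtain ⟨y, hy⟩ : (n : ℤ) ∣ b - a * x := by
      rw [← ZMod.intCast_zmod_eq_zero_iff_dvd]
      simp [hc]
    exact ⟨x, y, by linear_combination hy⟩
  · rintro ⟨x, y, rfl⟩
    exact ⟨x, by simp⟩

lemma gcd_eq_prime_gcd_of_coprime {p m r a n : ℕ} (hp : p.Prime) (hmr : m.Coprime r)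
    (hgcd : (r * a).gcd (m * n) ∣ p) (hiff : p ∣ r * a ↔ p ∣ m * n) :
    n.gcd a = p.gcd ((m * a).gcd (r * n)) := by
  apply Nat.dvd_antisymm
  · have hn : n.gcd a ∣ n := Nat.gcd_dvd_left n a
    have ha : n.gcd a ∣ a := Nat.gcd_dvd_right n a
    exact Nat.dvd_gcd ((Nat.dvd_gcd (ha.mul_left r) (hn.mul_left m)).trans hgcd)
      (Nat.dvd_gcd (ha.mul_left m) (hn.mul_left r))
  · rcases Nat.coprime_or_dvd_of_prime hp ((m * a).gcd (r * n)) with hcop | hdvd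
    · rw [hcop]
      exact one_dvd _
    · obtain ⟨hma, hrn⟩ := Nat.dvd_gcd_iff.mp hdvd
      have not_dvd_both : ¬(p ∣ m ∧ p ∣ r) := fun h =>
        Nat.not_coprime_of_dvd_of_dvd hp.one_lt h.1 h.2 hmr
      rw [hp.dvd_mul] at hma hrn
      rw [hp.dvd_mul, hp.dvd_mul] at hiff
      exact (Nat.gcd_dvd_left _ _).trans (Nat.dvd_gcd (by tauto) (by tauto))

lemma gcd_eq_div_gcd_mul_gcd {p d r N : ℕ} (hp : p.Prime) (hd : 0 < d) (hdvd : d ∣ r * N)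
    (hgcd : r.gcd N ∣ p) (hiff : p ∣ r ↔ p ∣ N) :
    N.gcd d = d / d.gcd r * p.gcd (d.gcd (r * N / d)) := by
  have ha : 0 < d.gcd r := Nat.gcd_pos_of_pos_left r hd
  obtain ⟨m, s, hms, hm, hs⟩ := Nat.exists_coprime d r
  generalize d.gcd r = a at *
  subst hm hs
  obtain ⟨n, rfl⟩ : m ∣ N := by
    rw [mul_right_comm] at hdvd
    exact hms.dvd_of_dvd_mul_left (Nat.dvd_of_mul_dvd_mul_right ha hdvd)
  have hquot : s * a * (m * n) / (m * a) = s * n :=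
    Nat.div_eq_of_eq_mul_right hd (by ring)
  rw [hquot, Nat.mul_div_cancel m ha, Nat.gcd_mul_left,
    gcd_eq_prime_gcd_of_coprime hp hms hgcd hiff]

lemma gcd_sq_sub_add_one {d q : ℕ} (hdvd : d ∣ q ^ 3 + 1) :
    (q ^ 2 - q + 1).gcd d = d / d.gcd (q + 1) * Nat.gcd 3 (d.gcd ((q ^ 3 + 1) / d)) := by
  have hN : q ^ 2 - q + 1 + q = q ^ 2 + 1 := by
    have := Nat.le_self_pow two_ne_zero q
    lia
  generalize q ^ 2 - q + 1 = N at *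
  have factor : q ^ 3 + 1 = (q + 1) * N := by
    zify at hN ⊢
    linear_combination -(q + 1 : ℤ) * hN
  have square : (q + 1) ^ 2 = N + 3 * q := by linear_combination -hN
  have gcd_dvd_three : (q + 1).gcd N ∣ 3 := by
    have h : (q + 1).gcd N ∣ (q + 1) * q + 3 := by
      rw [show (q + 1) * q + 3 = N + (q + 1) * 2 by linear_combination -hN]
      exact dvd_add (Nat.gcd_dvd_right _ _) ((Nat.gcd_dvd_left _ _).mul_right 2)
    exact (Nat.dvd_add_right ((Nat.gcd_dvd_left _ _).mul_right q)).mp h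
  have three_dvd_iff : 3 ∣ q + 1 ↔ 3 ∣ N := by
    rw [← Nat.prime_three.prime.dvd_pow_iff_dvd two_ne_zero, square]
    exact Nat.dvd_add_left (dvd_mul_right 3 q)
  rw [factor] at hdvd ⊢
  exact gcd_eq_div_gcd_mul_gcd Nat.prime_three (Nat.pos_of_dvd_of_pos hdvd (by lia)) hdvd
    gcd_dvd_three three_dvd_iff

lemma sq_sub_add_one_dvd_iff {d q : ℕ} (hdvd : d ∣ q ^ 3 + 1) (K : ℤ) :
    (q : ZMod d) ^ 2 - q + 1 ∣ ((K * (d / d.gcd (q + 1) : ℕ) : ℤ) : ZMod d) ↔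
      (Nat.gcd 3 (d.gcd ((q ^ 3 + 1) / d)) : ℤ) ∣ K := by
  have hd : 0 < d := Nat.pos_of_dvd_of_pos hdvd (Nat.succ_pos _)
  have hm : ((d / d.gcd (q + 1) : ℕ) : ℤ) ≠ 0 := by
    exact_mod_cast (Nat.div_gcd_pos_of_pos_left (q + 1) hd).ne'
  have cast_eq : (q : ZMod d) ^ 2 - q + 1 = (q ^ 2 - q + 1 : ℕ) := by
    simp [Nat.cast_sub (Nat.le_self_pow two_ne_zero q)]
  rw [cast_eq, zmod_natCast_dvd_intCast_iff, gcd_sq_sub_add_one hdvd, Nat.cast_mul, mul_comm K,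
    mul_dvd_mul_iff_left hm]

lemma zmod_mul_div_gcd_eq_zero (d r : ℕ) : (r : ZMod d) * (d / d.gcd r : ℕ) = 0 := by
  have hdvd : d ∣ r * (d / d.gcd r) := by
    rw [← Nat.mul_div_assoc r (Nat.gcd_dvd_left d r), mul_comm,
      Nat.mul_div_assoc d (Nat.gcd_dvd_right d r)]
    exact dvd_mul_right d _
  exact_mod_cast (ZMod.natCast_eq_zero_iff _ _).mpr hdvd

end Arithmetic

theorem stmt_14_general {R : Type*} [CommSemiring R] (d q : ℕ) (hdvd : d ∣ q ^ 3 + 1)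
    (ξ : Rˣ) (hξ : IsPrimitiveRoot ξ d) (A B : (Matrix (Fin 3) (Fin 3) R)ˣ)
    (hA : (A : Matrix (Fin 3) (Fin 3) R) = diagonal ![1, (ξ : R), (ξ : R) ^ q])
    (hB : (B : Matrix (Fin 3) (Fin 3) R) = !![0, 1, 0; 0, 0, 1; 1, 0, 0]) (k k' : ℤ) :
    lineOrbit (Subgroup.closure {A, B})
        ![1, 1, ↑(ξ ^ (k * ((d / Nat.gcd d (q + 1) : ℕ) : ℤ)))] =
      lineOrbit (Subgroup.closure {A, B})
        ![1, 1, ↑(ξ ^ (k' * ((d / Nat.gcd d (q + 1) : ℕ) : ℤ)))] ↔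
      (Nat.gcd 3 (Nat.gcd d ((q ^ 3 + 1) / d)) : ℤ) ∣ k - k' := by
  have hd : 0 < d := Nat.pos_of_dvd_of_pos hdvd (Nat.succ_pos _)
  have : NeZero d := ⟨hd.ne'⟩
  obtain ⟨ψ, hψ, hψ_intCast⟩ := exists_injective_addChar_intCast_eq_zpow hξ
  have hq : (q : ZMod d) ^ 3 = -1 := by
    rw [eq_neg_iff_add_eq_zero]
    exact_mod_cast (ZMod.natCast_eq_zero_iff _ _).mpr hdvd
  have ψ_one : ψ 1 = ξ := by simpa using hψ_intCast 1
  have ψ_q : ψ q = ξ ^ q := by simpa using hψ_intCast q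
  have hA' : IsMonomial A (fun i => ψ (![0, 1, (q : ZMod d)] i)) 0 := fun v i => by
    rw [hA, mulVec_diagonal]
    fin_cases i <;> simp [ψ_one, ψ_q]
  have hB' : IsMonomial B 1 1 := fun v i => by
    rw [hB]
    fin_cases i <;> simp [mulVec, dotProduct, Fin.sum_univ_three]
  have hm (k : ℤ) : ((q : ZMod d) + 1) * ((k * (d / d.gcd (q + 1) : ℕ) : ℤ) : ZMod d) = 0 := by
    have h := zmod_mul_div_gcd_eq_zero d (q + 1)
    rw [Nat.cast_succ] at h
    rw [Int.cast_mul, Int.cast_natCast, mul_left_comm, h, mul_zero]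
  rw [← hψ_intCast, ← hψ_intCast, lineOrbit_closure_eq_iff_dvd_sub hψ hq hA' hB' (hm k) (hm k'),
    ← Int.cast_sub, ← sub_mul, sq_sub_add_one_dvd_iff hdvd]

/-- Assume `d ∣ q³+1`, let `α = gcd(d, q+1)` and `γ = gcd(3, gcd(d, (q³+1)/d))`.
For all integers `k, k'`, the `G_{d,q}`-orbits of the lines
`L_k = {(a, a, ξ^{k(d/α)} a)}` and `L_{k'}` coincide iff `k ≡ k' (mod γ)`. -/
theorem stmt_14 (d q : ℕ) (hd : 1 ≤ d) (hq : q < d) (hdq : Nat.gcd d q = 1)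
    (hdvd : d ∣ q ^ 3 + 1)
    (ξ : ℂ) (hξ : IsPrimitiveRoot ξ d)
    (A B : (Matrix (Fin 3) (Fin 3) ℂ)ˣ)
    (hA : (A : Matrix (Fin 3) (Fin 3) ℂ) = Matrix.diagonal ![1, ξ, ξ ^ q])
    (hB : (B : Matrix (Fin 3) (Fin 3) ℂ) = !![0,1,0; 0,0,1; 1,0,0])
    (k k' : ℤ) :
    {x : Fin 3 → ℂ | ∃ g ∈ Subgroup.closure {A, B}, ∃ a : ℂ,
        x = (g : Matrix (Fin 3) (Fin 3) ℂ).mulVec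
          ![a, a, ξ ^ (k * ((d / Nat.gcd d (q + 1) : ℕ) : ℤ)) * a]} =
      {x : Fin 3 → ℂ | ∃ g ∈ Subgroup.closure {A, B}, ∃ a : ℂ,
        x = (g : Matrix (Fin 3) (Fin 3) ℂ).mulVec
          ![a, a, ξ ^ (k' * ((d / Nat.gcd d (q + 1) : ℕ) : ℤ)) * a]} ↔
      ((Nat.gcd 3 (Nat.gcd d ((q ^ 3 + 1) / d)) : ℤ)) ∣ k - k' := by
  lift ξ to ℂˣ using hξ.isUnit (by lia)
  simpa only [lineOrbit_one_one, Units.val_zpow_eq_zpow_val] using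
    stmt_14_general d q hdvd ξ (IsPrimitiveRoot.coe_units_iff.mp hξ) A B hA hB k k'
end

section
/- Let ε ∈ ℂ be a primitive cube root of unity, let k ∈ {0, 1, 2}, and let c ∈ ℂ. Define φ : ℂ³ → ℂ³ by φ(x,y,z) = ( x·e^{y+z}, ε^k(e^{(ε−1)y+(ε²−1)z} − 1), ε^{2k}(e^{(ε²−1)y+(ε−1)z} − 1) ), and define the (a priori rational) map N_c(u,v,w) = ( c·u·(v+ε^k), (w − ε^k v)/(v + ε^k), (−ε^{2k} v)/(v + ε^k) ). Then for every (x,y,z) ∈ ℂ³ the second coordinate of φ(x,y,z) plus ε^k is nonzero (so N_c is defined at φ(x,y,z)), and N_c(φ(x,y,z)) = φ(c ε^k x, ε y, ε² z). In other words, φ conjugates the nonlinear transformation N_c into the linear map diag(c ε^k, ε, ε²). -/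
open Complex

/-- The map `φ(x,y,z) = (x e^{y+z}, ε^k(e^{(ε−1)y+(ε²−1)z} − 1), ε^{2k}(e^{(ε²−1)y+(ε−1)z} − 1))`. -/
noncomputable def phiMap (ε : ℂ) (k : ℕ) (p : ℂ × ℂ × ℂ) : ℂ × ℂ × ℂ :=
  (p.1 * Complex.exp (p.2.1 + p.2.2),
   ε ^ k * (Complex.exp ((ε - 1) * p.2.1 + (ε ^ 2 - 1) * p.2.2) - 1),
   ε ^ (2 * k) * (Complex.exp ((ε ^ 2 - 1) * p.2.1 + (ε - 1) * p.2.2) - 1))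

/-- The (a priori rational) map
`N_c(u,v,w) = (c u (v+ε^k), (w − ε^k v)/(v + ε^k), (−ε^{2k} v)/(v + ε^k))`. -/
noncomputable def nMap (ε : ℂ) (k : ℕ) (c : ℂ) (p : ℂ × ℂ × ℂ) : ℂ × ℂ × ℂ :=
  (c * p.1 * (p.2.1 + ε ^ k),
   (p.2.2 - ε ^ k * p.2.1) / (p.2.1 + ε ^ k),
   (-(ε ^ (2 * k)) * p.2.1) / (p.2.1 + ε ^ k))

/-!
In the coordinates `A = (v + d) / d`, `B = (w + d²) / d²`, where `d = ε ^ k`, the map `N_c` becomes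
the monomial map `(u, A, B) ↦ (c d u A, B / A, A⁻¹)`, and `φ` sets `A = exp α`, `B = exp β` with
`α = (ε - 1) y + (ε² - 1) z` and `β = (ε² - 1) y + (ε - 1) z`. Because `ε³ = 1`, the substitution
`(y, z) ↦ (ε y, ε² z)` sends `(α, β)` to `(β - α, -α)` and `y + z` to `y + z + α`.
-/

section Field

variable {K : Type*} [Field K]

/-- The affine change of coordinates `(u, A, B) ↦ (u, v, w)` fixing `u`, with `v = d (A - 1)` and
`w = d² (B - 1)`; it straightens `rationalMap d c` into a monomial map. -/
def affineChart (d : K) (p : K × K × K) : K × K × K :=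
  (p.1, d * (p.2.1 - 1), d ^ 2 * (p.2.2 - 1))

/-- The monomial map `(u, A, B) ↦ (a u A, B / A, A⁻¹)`, meaningful where `A ≠ 0`. -/
def monomialMap (a : K) (p : K × K × K) : K × K × K :=
  (a * p.1 * p.2.1, p.2.2 / p.2.1, p.2.1⁻¹)

/-- The map `N_c` with an arbitrary parameter `d` in place of `ε ^ k`, meaningful where
`v + d ≠ 0`. -/
def rationalMap (d c : K) (p : K × K × K) : K × K × K :=
  (c * p.1 * (p.2.1 + d), (p.2.2 - d * p.2.1) / (p.2.1 + d), (-d ^ 2 * p.2.1) / (p.2.1 + d))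

theorem affineChart_snd_fst_add (d : K) (p : K × K × K) :
    (affineChart d p).2.1 + d = d * p.2.1 := by
  simp only [affineChart]
  ring

theorem rationalMap_affineChart {d : K} (hd : d ≠ 0) (c : K) {p : K × K × K} (hp : p.2.1 ≠ 0) :
    rationalMap d c (affineChart d p) = affineChart d (monomialMap (c * d) p) := by
  simp only [rationalMap, affineChart_snd_fst_add]
  simp only [affineChart, monomialMap, Prod.mk.injEq]
  refine ⟨by ring, ?_, ?_⟩ <;> field_simp <;> ring

end Field

/-- The map `φ` in the coordinates `(u, A, B)` of `affineChart`, where it no longer depends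
on `k`. -/
noncomputable def expMap (ε : ℂ) (p : ℂ × ℂ × ℂ) : ℂ × ℂ × ℂ :=
  (p.1 * exp (p.2.1 + p.2.2),
   exp ((ε - 1) * p.2.1 + (ε ^ 2 - 1) * p.2.2),
   exp ((ε ^ 2 - 1) * p.2.1 + (ε - 1) * p.2.2))

theorem monomialMap_expMap {ε : ℂ} (hε : ε ^ 3 = 1) (a x y z : ℂ) :
    monomialMap a (expMap ε (x, y, z)) = expMap ε (a * x, ε * y, ε ^ 2 * z) := by
  have exponent_fst :
      ε * y + ε ^ 2 * z = (y + z) + ((ε - 1) * y + (ε ^ 2 - 1) * z) := by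
    ring
  have exponent_snd : (ε - 1) * (ε * y) + (ε ^ 2 - 1) * (ε ^ 2 * z) =
      ((ε ^ 2 - 1) * y + (ε - 1) * z) - ((ε - 1) * y + (ε ^ 2 - 1) * z) := by
    linear_combination ε * z * hε
  have exponent_thd : (ε ^ 2 - 1) * (ε * y) + (ε - 1) * (ε ^ 2 * z) =
      -((ε - 1) * y + (ε ^ 2 - 1) * z) := by
    linear_combination (y + z) * hε
  simp only [monomialMap, expMap, exponent_fst, exponent_snd, exponent_thd, exp_sub, exp_neg,
    exp_add (y + z), mul_assoc]

theorem phiMap_eq_affineChart_expMap (ε : ℂ) (k : ℕ) (p : ℂ × ℂ × ℂ) :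
    phiMap ε k p = affineChart (ε ^ k) (expMap ε p) := by
  simp only [phiMap, affineChart, expMap, pow_mul']

theorem nMap_eq_rationalMap (ε : ℂ) (k : ℕ) (c : ℂ) : nMap ε k c = rationalMap (ε ^ k) c := by
  funext p
  simp only [nMap, rationalMap, pow_mul']

theorem stmt_16_general {ε d : ℂ} (hε : ε ^ 3 = 1) (hd : d ≠ 0) (c x y z : ℂ) :
    (affineChart d (expMap ε (x, y, z))).2.1 + d ≠ 0 ∧
    rationalMap d c (affineChart d (expMap ε (x, y, z))) =
      affineChart d (expMap ε (c * d * x, ε * y, ε ^ 2 * z)) := by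
  have hA : (expMap ε (x, y, z)).2.1 ≠ 0 := exp_ne_zero _
  constructor
  · rw [affineChart_snd_fst_add]
    exact mul_ne_zero hd hA
  · rw [rationalMap_affineChart hd c hA, monomialMap_expMap hε]

/-- For `ε` a primitive cube root of unity, `k ∈ {0,1,2}` and `c ∈ ℂ`: for every
`(x,y,z) ∈ ℂ³` the second coordinate of `φ(x,y,z)` plus `ε^k` is nonzero (so `N_c` is
defined at `φ(x,y,z)`), and `N_c(φ(x,y,z)) = φ(cε^k x, εy, ε²z)`; that is, `φ`
conjugates the nonlinear transformation `N_c` into the linear map `diag(cε^k, ε, ε²)`. -/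
theorem stmt_16 (ε : ℂ) (hε : IsPrimitiveRoot ε 3) (k : ℕ) (hk : k < 3) (c : ℂ)
    (x y z : ℂ) :
    (phiMap ε k (x, y, z)).2.1 + ε ^ k ≠ 0 ∧
    nMap ε k c (phiMap ε k (x, y, z)) = phiMap ε k (c * ε ^ k * x, ε * y, ε ^ 2 * z) := by
  simp only [phiMap_eq_affineChart_expMap, nMap_eq_rationalMap]
  exact stmt_16_general hε.pow_eq_one (pow_ne_zero k (hε.ne_zero three_ne_zero)) c x y z
end
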